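/- Let 1<p<∞ and let μ be a finite positive Borel measure on [0,1). Then the operator H_μ is well defined on the Hardy space H^p and bounded from H^p into itself if and only if μ is a Carleson measure. -/

import Mathlib

/-!
On `H^p` the operator `H_μ` is the integral operator `I_μ f z = ∫ f t / (1 - t z) dμ(t)`, and up to
a factor `3` the kernel `|1 - t exp (iθ)|⁻¹` is `(|1 - exp (iθ)| + (1 - t))⁻¹`, a Hilbert kernel
`(s + u)⁻¹` in the distances to `1` along the circle and along the radius. Schur's test with the
weights `s ^ (-1 / (p q))` and `u ^ (-1 / (p q))` bounds it on `L^p` whenever both variables have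
sublevel sets of linearly bounded measure, which for `1 - t` is exactly the Carleson condition.

Applied from the circle to the radius, after Cauchy's formula, this gives the Carleson embedding
`H^p → L^p(μ)`; applied from the radius to the circle it bounds `I_μ` from `L^p(μ)` to `H^p`. A
point mass on the radius is a Carleson measure, so the same inequality yields the growth
`|f a| ≲ ‖f‖ (1 - a) ^ (-1 / p)` and the norm of `z ↦ (1 - a z)⁻¹` in `H^p`. Testing `H_μ` on the
latter at the point `a` gives the converse.

The identity `H_μ = I_μ` requires `∑ |a_k| t ^ k` to be `μ`-integrable. For `p ≤ 2`, interpolating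
between the growth of `f` and its `p`-means bounds the quadratic means, and Parseval and
Cauchy-Schwarz then bound this sum by a multiple of `(1 - t) ^ (-(3 - p) / 2)`, whose exponent is
greater than `-1`; for `p > 2` one uses `H^p ⊆ H^2`.
-/

open MeasureTheory Set Metric ENNReal

noncomputable section

namespace PaperHankel

/-- The moment of order `n` of a measure on `[0,1)`:  `μ_n = ∫_{[0,1)} t^n dμ(t)`. -/
def mom (μ : Measure ℝ) (n : ℕ) : ℝ := ∫ t in Ico (0:ℝ) 1, t ^ n ∂μ

/-- The `n`-th Taylor coefficient of `f` at `0`. -/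
def tc (f : ℂ → ℂ) (n : ℕ) : ℂ := iteratedDeriv n f 0 / n.factorial

/-- The `n`-th Taylor coefficient of `H_μ f`, namely `∑_k μ_{n+k} a_k`. -/
def hmuCoeff (μ : Measure ℝ) (f : ℂ → ℂ) (n : ℕ) : ℂ :=
  ∑' k : ℕ, (mom μ (n + k) : ℂ) * tc f k

/-- `H_μ f` is well defined: each coefficient series converges absolutely, and the resulting
power series has radius of convergence at least `1`. -/
def HmuWD (μ : Measure ℝ) (f : ℂ → ℂ) : Prop :=
  (∀ n : ℕ, Summable fun k : ℕ => ‖(mom μ (n + k) : ℂ) * tc f k‖) ∧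
  ∀ z ∈ ball (0:ℂ) 1, Summable fun n : ℕ => ‖hmuCoeff μ f n * z ^ n‖

/-- The generalized Hilbert operator induced by the Hankel matrix of moments of `μ`. -/
def Hmu (μ : Measure ℝ) (f : ℂ → ℂ) : ℂ → ℂ :=
  fun z => ∑' n : ℕ, hmuCoeff μ f n * z ^ n

/-- `I_μ f` is well defined: the defining integral converges absolutely for every `z ∈ 𝔻`. -/
def ImuWD (μ : Measure ℝ) (f : ℂ → ℂ) : Prop :=
  ∀ z ∈ ball (0:ℂ) 1, IntegrableOn (fun t : ℝ => f t / (1 - t * z)) (Ico (0:ℝ) 1) μ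

/-- The integral operator `I_μ f (z) = ∫_{[0,1)} f(t)/(1-tz) dμ(t)`. -/
def Imu (μ : Measure ℝ) (f : ℂ → ℂ) : ℂ → ℂ :=
  fun z => ∫ t in Ico (0:ℝ) 1, f t / (1 - t * z) ∂μ

/-- The `p`-th circle mean `M_p(r,f)` raised into the Hardy norm shape:
`((1/2π) ∫_0^{2π} |f(r e^{iθ})|^p dθ)^{1/p}`. -/
def circMean (p : ℝ) (f : ℂ → ℂ) (r : ℝ) : ℝ :=
  ((2 * Real.pi)⁻¹ * ∫ θ in (0:ℝ)..(2 * Real.pi),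
      ‖f (r * Complex.exp (θ * Complex.I))‖ ^ p) ^ (1 / p)

/-- Membership in the Hardy space `H^p`. -/
def MemHardy (p : ℝ) (f : ℂ → ℂ) : Prop :=
  DifferentiableOn ℂ f (ball (0:ℂ) 1) ∧ ∃ M : ℝ, ∀ r ∈ Ico (0:ℝ) 1, circMean p f r ≤ M

/-- The `H^p` norm. -/
def hardyNorm (p : ℝ) (f : ℂ → ℂ) : ℝ :=
  sSup {x : ℝ | ∃ r ∈ Ico (0:ℝ) 1, x = circMean p f r}

/-- Membership in `H^∞`: analytic and bounded on the unit disc. -/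
def MemHinf (f : ℂ → ℂ) : Prop :=
  DifferentiableOn ℂ f (ball (0:ℂ) 1) ∧ ∃ M : ℝ, ∀ z ∈ ball (0:ℂ) 1, ‖f z‖ ≤ M

/-- The `H^∞` norm. -/
def hinfNorm (f : ℂ → ℂ) : ℝ := sSup {x : ℝ | ∃ z ∈ ball (0:ℂ) 1, x = ‖f z‖}

/-- The mean `M_2(r,g) = ((1/2π) ∫_0^{2π} |g(r e^{iθ})|² dθ)^{1/2}`. -/
def M2 (g : ℂ → ℂ) (r : ℝ) : ℝ :=
  Real.sqrt ((2 * Real.pi)⁻¹ * ∫ θ in (0:ℝ)..(2 * Real.pi),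
      ‖g (r * Complex.exp (θ * Complex.I))‖ ^ 2)

/-- Membership in the mean Lipschitz space `Λ²_{1/2}`:
`M_2(r,f') = O((1-r)^{-1/2})` as `r → 1⁻`. -/
def MemLambda (f : ℂ → ℂ) : Prop :=
  DifferentiableOn ℂ f (ball (0:ℂ) 1) ∧
  ∃ C : ℝ, ∀ r ∈ Ico (0:ℝ) 1, Real.sqrt (1 - r) * M2 (deriv f) r ≤ C

/-- The norm on `Λ²_{1/2}`. -/
def lambdaNorm (f : ℂ → ℂ) : ℝ :=
  ‖f 0‖ + sSup {x : ℝ | ∃ r ∈ Ico (0:ℝ) 1, x = Real.sqrt (1 - r) * M2 (deriv f) r}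

/-- `∫_𝔻 |f'(z)|² g(z,a)^s dA(z)` with `g(z,a) = log |(1- ā z)/(z-a)|` and `dA` the
normalized area measure, computed as a lower integral in `[0,∞]`. -/
def qsInt (s : ℝ) (f : ℂ → ℂ) (a : ℂ) : ℝ≥0∞ :=
  (ENNReal.ofReal Real.pi)⁻¹ * ∫⁻ z in ball (0:ℂ) 1,
    ENNReal.ofReal (‖deriv f z‖ ^ 2 * (Real.log ‖(1 - (starRingEnd ℂ) a * z) / (z - a)‖) ^ s)

/-- Membership in `Q_s`: analytic on `𝔻` with `ρ_{Q_s}(f)² = sup_{a ∈ 𝔻} ∫ ... < ∞`. -/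
def MemQs (s : ℝ) (f : ℂ → ℂ) : Prop :=
  DifferentiableOn ℂ f (ball (0:ℂ) 1) ∧ (⨆ a ∈ ball (0:ℂ) 1, qsInt s f a) < ⊤

/-- The norm on `Q_s`, `‖f‖ = |f(0)| + ρ_{Q_s}(f)`. -/
def qsNorm (s : ℝ) (f : ℂ → ℂ) : ℝ :=
  ‖f 0‖ + Real.sqrt (⨆ a ∈ ball (0:ℂ) 1, qsInt s f a).toReal

/-- The condition `∫_{[0,1)} tⁿ log(1/(1-t)) dμ(t) = O(1/n)`, stated with the lower
integral so that in particular the integrals are finite. -/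
def LogMomentBigO (μ : Measure ℝ) : Prop :=
  ∃ C > 0, ∀ n : ℕ, 1 ≤ n →
    (∫⁻ t in Ico (0:ℝ) 1, ENNReal.ofReal (t ^ n * Real.log (1 / (1 - t))) ∂μ) ≤
      ENNReal.ofReal (C / n)

/-- Membership in the Bloch space. -/
def MemBloch (f : ℂ → ℂ) : Prop :=
  DifferentiableOn ℂ f (ball (0:ℂ) 1) ∧
  ∃ M : ℝ, ∀ z ∈ ball (0:ℂ) 1, (1 - ‖z‖ ^ 2) * ‖deriv f z‖ ≤ M

/-- The Bloch norm `‖f‖ = |f(0)| + ρ_B(f)`. -/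
def blochNorm (f : ℂ → ℂ) : ℝ :=
  ‖f 0‖ + sSup {x : ℝ | ∃ z ∈ ball (0:ℂ) 1, x = (1 - ‖z‖ ^ 2) * ‖deriv f z‖}

/-- Membership in the Besov space `B^p`. -/
def MemBesov (p : ℝ) (f : ℂ → ℂ) : Prop :=
  DifferentiableOn ℂ f (ball (0:ℂ) 1) ∧
  IntegrableOn (fun z : ℂ => (1 - ‖z‖ ^ 2) ^ (p - 2) * ‖deriv f z‖ ^ p) (ball (0:ℂ) 1) volume

/-- The Besov norm `‖f‖ = |f(0)| + ρ_p(f)`. -/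
def besovNorm (p : ℝ) (f : ℂ → ℂ) : ℝ :=
  ‖f 0‖ + (Real.pi⁻¹ *
    ∫ z in ball (0:ℂ) 1, (1 - ‖z‖ ^ 2) ^ (p - 2) * ‖deriv f z‖ ^ p) ^ (1 / p)

/-- `μ` is an `α`-logarithmic `s`-Carleson measure on `[0,1)`. -/
def IsLogCarleson (μ : Measure ℝ) (α s : ℝ) : Prop :=
  ∃ C > 0, ∀ t ∈ Ico (0:ℝ) 1,
    (μ (Ico t 1)).toReal * Real.log (2 / (1 - t)) ^ α ≤ C * (1 - t) ^ s

/-- `μ` is an `s`-Carleson measure on `[0,1)`. -/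
def IsCarleson (μ : Measure ℝ) (s : ℝ) : Prop :=
  ∃ C > 0, ∀ t ∈ Ico (0:ℝ) 1, (μ (Ico t 1)).toReal ≤ C * (1 - t) ^ s

section SchurTest

variable {X Y : Type*} [MeasurableSpace X] [MeasurableSpace Y] {m : Measure X} {n : Measure Y}
  {p q : ℝ}

lemma lintegral_mul_rpow_le (hpq : p.HolderConjugate q) {k g ψ : Y → ℝ≥0∞} (hk : AEMeasurable k n)
    (hg : AEMeasurable g n) (hψ : AEMeasurable ψ n) (hψ0 : ∀ᵐ y ∂n, ψ y ≠ 0)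
    (hψt : ∀ᵐ y ∂n, ψ y ≠ ⊤) :
    (∫⁻ y, k y * g y ∂n) ^ p ≤
      (∫⁻ y, k y * ψ y ^ q ∂n) ^ (p / q) * ∫⁻ y, k y * (g y / ψ y) ^ p ∂n := by
  have hp := hpq.pos
  have hq := hpq.symm.pos
  have split_integrand : ∀ᵐ y ∂n,
      k y * g y = (k y ^ (1 / p) * (g y / ψ y)) * (k y ^ (1 / q) * ψ y) := by
    filter_upwards [hψ0, hψt] with y h0 ht
    rw [mul_mul_mul_comm, ← ENNReal.rpow_add_of_nonneg _ _ (by positivity) (by positivity),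
      one_div, one_div, hpq.inv_add_inv_eq_one, ENNReal.rpow_one, ENNReal.div_mul_cancel h0 ht]
  calc (∫⁻ y, k y * g y ∂n) ^ p
      = (∫⁻ y, (k y ^ (1 / p) * (g y / ψ y)) * (k y ^ (1 / q) * ψ y) ∂n) ^ p := by
        rw [lintegral_congr_ae split_integrand]
    _ ≤ ((∫⁻ y, (k y ^ (1 / p) * (g y / ψ y)) ^ p ∂n) ^ (1 / p) *
          (∫⁻ y, (k y ^ (1 / q) * ψ y) ^ q ∂n) ^ (1 / q)) ^ p := by
        gcongr
        exact ENNReal.lintegral_mul_le_Lp_mul_Lq n hpq (by fun_prop) (by fun_prop)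
    _ = _ := by
        simp only [ENNReal.mul_rpow_of_nonneg _ _ hp.le, ENNReal.mul_rpow_of_nonneg _ _ hq.le,
          ← ENNReal.rpow_mul, one_div, inv_mul_cancel₀ hp.ne', inv_mul_cancel₀ hq.ne',
          ENNReal.rpow_one]
        rw [mul_comm, inv_mul_eq_div]

theorem schur_test [SFinite m] [SFinite n] (hpq : p.HolderConjugate q) {K : X → Y → ℝ≥0∞}
    (hK : Measurable (Function.uncurry K)) {φ : X → ℝ≥0∞} {ψ g : Y → ℝ≥0∞} (hφ : Measurable φ)
    (hψ : Measurable ψ) (hψ0 : ∀ᵐ y ∂n, ψ y ≠ 0) (hψt : ∀ᵐ y ∂n, ψ y ≠ ⊤) {A B : ℝ≥0∞}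
    (hA : ∀ᵐ x ∂m, ∫⁻ y, K x y * ψ y ^ q ∂n ≤ A * φ x ^ q)
    (hB : ∀ᵐ y ∂n, ∫⁻ x, K x y * φ x ^ p ∂m ≤ B * ψ y ^ p) (hg : AEMeasurable g n) :
    ∫⁻ x, (∫⁻ y, K x y * g y ∂n) ^ p ∂m ≤ A ^ (p / q) * B * ∫⁻ y, g y ^ p ∂n := by
  have hp := hpq.pos
  have hq := hpq.symm.pos
  have hgψ : AEMeasurable (fun y ↦ (g y / ψ y) ^ p) n := by fun_prop
  have hKφ : AEMeasurable (Function.uncurry fun x y ↦ φ x ^ p * (K x y * (g y / ψ y) ^ p))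
      (m.prod n) :=
    (hφ.comp measurable_fst |>.pow_const p).aemeasurable.mul (hK.aemeasurable.mul hgψ.comp_snd)
  calc ∫⁻ x, (∫⁻ y, K x y * g y ∂n) ^ p ∂m
      ≤ ∫⁻ x, A ^ (p / q) * ∫⁻ y, φ x ^ p * (K x y * (g y / ψ y) ^ p) ∂n ∂m := by
        refine lintegral_mono_ae (hA.mono fun x hx ↦ ?_)
        calc (∫⁻ y, K x y * g y ∂n) ^ p
            ≤ (∫⁻ y, K x y * ψ y ^ q ∂n) ^ (p / q) * ∫⁻ y, K x y * (g y / ψ y) ^ p ∂n :=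
              lintegral_mul_rpow_le hpq (by fun_prop) hg hψ.aemeasurable hψ0 hψt
          _ ≤ (A * φ x ^ q) ^ (p / q) * ∫⁻ y, K x y * (g y / ψ y) ^ p ∂n := by gcongr
          _ = A ^ (p / q) * ∫⁻ y, φ x ^ p * (K x y * (g y / ψ y) ^ p) ∂n := by
              rw [ENNReal.mul_rpow_of_nonneg _ _ (by positivity), ← ENNReal.rpow_mul,
                mul_div_cancel₀ _ hq.ne', lintegral_const_mul'' _ (by fun_prop), mul_assoc]
    _ = A ^ (p / q) * ∫⁻ y, ∫⁻ x, φ x ^ p * (K x y * (g y / ψ y) ^ p) ∂m ∂n := by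
        rw [lintegral_const_mul'' _ hKφ.lintegral_prod_right, lintegral_lintegral_swap hKφ]
    _ ≤ A ^ (p / q) * ∫⁻ y, B * g y ^ p ∂n := by
        refine mul_le_mul_right (lintegral_mono_ae ?_) _
        filter_upwards [hB, hψ0, hψt] with y hy h0 ht
        calc ∫⁻ x, φ x ^ p * (K x y * (g y / ψ y) ^ p) ∂m
            = (∫⁻ x, K x y * φ x ^ p ∂m) * (g y / ψ y) ^ p := by
              rw [← lintegral_mul_const _ (by fun_prop)]
              exact lintegral_congr fun x ↦ by ring
          _ ≤ B * ψ y ^ p * (g y / ψ y) ^ p := by gcongr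
          _ = B * g y ^ p := by
              rw [mul_assoc, ← ENNReal.mul_rpow_of_nonneg _ _ hp.le, ENNReal.mul_div_cancel h0 ht]
    _ = A ^ (p / q) * B * ∫⁻ y, g y ^ p ∂n := by
        rw [lintegral_const_mul'' _ (by fun_prop), mul_assoc]

end SchurTest

section LinearSublevels

open scoped NNReal

variable {X Y : Type*} [MeasurableSpace X] [MeasurableSpace Y]

/-- The sublevel sets `{s ≤ x}` have `m`-measure at most `C * x`; in particular `s > 0` almost
everywhere. With `s t = 1 - t` this is the Carleson condition; it also holds for the distance to
`1` on the unit circle, so that one Hilbert inequality covers both. -/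
structure HasLinearSublevels (m : Measure X) (s : X → ℝ) (C : ℝ≥0) : Prop where
  measurable : Measurable s
  measure_le : ∀ x : ℝ, m {z | s z ≤ x} ≤ C * ENNReal.ofReal x

namespace HasLinearSublevels

variable {m : Measure X} {n : Measure Y} {s : X → ℝ} {u : Y → ℝ} {C D : ℝ≥0}

lemma ae_pos (h : HasLinearSublevels m s C) : ∀ᵐ z ∂m, 0 < s z := by
  simpa [ae_iff] using h.measure_le 0

lemma measure_univ_le (h : HasLinearSublevels m s C) : m univ ≤ C * ⊤ := by
  have exhaust : univ = ⋃ k : ℕ, {z | s z ≤ k} :=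
    (eq_univ_of_forall fun z ↦ mem_iUnion.2 (exists_nat_ge (s z))).symm
  have mono : Monotone fun k : ℕ ↦ {z | s z ≤ k} := fun k l hkl z (hz : s z ≤ k) ↦
    hz.trans (by exact_mod_cast hkl)
  rw [exhaust, mono.measure_iUnion]
  exact iSup_le fun k ↦ (h.measure_le k).trans (by gcongr; exact le_top)

lemma measure_ofReal_le (h : HasLinearSublevels m s C) (V : ℝ≥0∞) :
    m {z | ENNReal.ofReal (s z) ≤ V} ≤ C * V := by
  obtain rfl | hV := eq_or_ne V ⊤
  · simpa using h.measure_univ_le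
  · simpa [ENNReal.ofReal_le_iff_le_toReal hV, ENNReal.ofReal_toReal hV] using
      h.measure_le V.toReal

lemma lintegral_comp_le (h : HasLinearSublevels m s C) {φ : ℝ → ℝ} (hφm : Measurable φ)
    (hφ : AntitoneOn φ (Ioi 0)) (hφ0 : ∀ x ∈ Ioi (0 : ℝ), 0 ≤ φ x) :
    ∫⁻ z, ENNReal.ofReal (φ (s z)) ∂m ≤ C * ∫⁻ x in Ioi 0, ENNReal.ofReal (φ x) := by
  rw [lintegral_eq_lintegral_meas_le m (h.ae_pos.mono fun z hz ↦ hφ0 _ hz)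
      (hφm.comp h.measurable).aemeasurable,
    lintegral_eq_lintegral_meas_le _ ((ae_restrict_mem measurableSet_Ioi).mono hφ0)
      hφm.aemeasurable, ← lintegral_const_mul' _ _ coe_ne_top]
  refine lintegral_mono fun c ↦ ?_
  set V := volume.restrict (Ioi (0 : ℝ)) {x | c ≤ φ x}
  have superlevel_subset : ∀ᵐ z ∂m, c ≤ φ (s z) → ENNReal.ofReal (s z) ≤ V := by
    filter_upwards [h.ae_pos] with z hz hc
    calc ENNReal.ofReal (s z) = volume (Ioc 0 (s z)) := by simp
      _ ≤ volume ({x | c ≤ φ x} ∩ Ioi 0) :=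
          measure_mono fun x hx ↦ ⟨hc.trans (hφ hx.1 hz hx.2), hx.1⟩
      _ ≤ V := Measure.le_restrict_apply _ _
  exact (measure_mono_ae superlevel_subset).trans (h.measure_ofReal_le V)

end HasLinearSublevels

lemma lintegral_Ioc_rpow_mul_inv_add_le {a y : ℝ} (ha : a < 1) (hy : 0 < y) :
    ∫⁻ x in Ioc 0 y, ENNReal.ofReal (x ^ (-a) * (x + y)⁻¹) ≤
      ENNReal.ofReal (y ^ (-a) / (1 - a)) := by
  have integrable : IntegrableOn (fun x : ℝ ↦ x ^ (-a) * y⁻¹) (Ioc 0 y) :=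
    ((intervalIntegrable_iff_integrableOn_Ioc_of_le hy.le).1
      (intervalIntegral.intervalIntegrable_rpow' (by linarith))).mul_const _
  calc ∫⁻ x in Ioc 0 y, ENNReal.ofReal (x ^ (-a) * (x + y)⁻¹)
      ≤ ∫⁻ x in Ioc 0 y, ENNReal.ofReal (x ^ (-a) * y⁻¹) := by
        refine setLIntegral_mono' measurableSet_Ioc fun x hx ↦ ?_
        have := hx.1
        gcongr
        linarith
    _ = ENNReal.ofReal (∫ x in Ioc 0 y, x ^ (-a) * y⁻¹) :=
        (ofReal_integral_eq_lintegral_ofReal integrable ((ae_restrict_mem measurableSet_Ioc).mono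
          fun x hx ↦ mul_nonneg (Real.rpow_nonneg hx.1.le _) (by positivity))).symm
    _ = ENNReal.ofReal (y ^ (-a) / (1 - a)) := by
        rw [integral_mul_const, ← intervalIntegral.integral_of_le hy.le,
          integral_rpow (Or.inl (by linarith)), Real.zero_rpow (by linarith), neg_add_eq_sub,
          sub_eq_neg_add 1 a, Real.rpow_add_one hy.ne']
        congr 1
        field_simp
        ring

lemma lintegral_Ioi_rpow_mul_inv_add_le {a y : ℝ} (ha : 0 < a) (hy : 0 < y) :
    ∫⁻ x in Ioi y, ENNReal.ofReal (x ^ (-a) * (x + y)⁻¹) ≤ ENNReal.ofReal (y ^ (-a) / a) := by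
  calc ∫⁻ x in Ioi y, ENNReal.ofReal (x ^ (-a) * (x + y)⁻¹)
      ≤ ∫⁻ x in Ioi y, ENNReal.ofReal (x ^ (-a - 1)) := by
        refine setLIntegral_mono' measurableSet_Ioi fun x hx ↦ ?_
        have hx0 : 0 < x := hy.trans hx
        rw [Real.rpow_sub_one hx0.ne', div_eq_mul_inv]
        gcongr
        linarith
    _ = ENNReal.ofReal (∫ x in Ioi y, x ^ (-a - 1)) :=
        (ofReal_integral_eq_lintegral_ofReal (integrableOn_Ioi_rpow_of_lt (by linarith) hy)
          ((ae_restrict_mem measurableSet_Ioi).mono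
            fun x hx ↦ Real.rpow_nonneg (hy.trans hx).le _)).symm
    _ = ENNReal.ofReal (y ^ (-a) / a) := by
        rw [integral_Ioi_rpow_of_lt (by linarith) hy, sub_add_cancel, neg_div_neg_eq]

lemma lintegral_Ioi_zero_rpow_mul_inv_add_le {a y : ℝ} (ha0 : 0 < a) (ha1 : a < 1) (hy : 0 < y) :
    ∫⁻ x in Ioi 0, ENNReal.ofReal (x ^ (-a) * (x + y)⁻¹) ≤
      ENNReal.ofReal (y ^ (-a) / (a * (1 - a))) := by
  have ha1' : 0 < 1 - a := by linarith
  calc ∫⁻ x in Ioi 0, ENNReal.ofReal (x ^ (-a) * (x + y)⁻¹)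
      ≤ ENNReal.ofReal (y ^ (-a) / (1 - a)) + ENNReal.ofReal (y ^ (-a) / a) := by
        rw [← Ioc_union_Ioi_eq_Ioi hy.le]
        exact (lintegral_union_le _ _ _).trans (add_le_add
          (lintegral_Ioc_rpow_mul_inv_add_le ha1 hy) (lintegral_Ioi_rpow_mul_inv_add_le ha0 hy))
    _ = ENNReal.ofReal (y ^ (-a) / (a * (1 - a))) := by
        rw [← ENNReal.ofReal_add (by positivity) (by positivity)]
        congr 1
        field_simp
        ring

namespace HasLinearSublevels

variable {m : Measure X} {n : Measure Y} {s : X → ℝ} {u : Y → ℝ} {C D : ℝ≥0}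

lemma lintegral_rpow_mul_inv_add_le (h : HasLinearSublevels m s C) {a y : ℝ} (ha0 : 0 < a)
    (ha1 : a < 1) (hy : 0 < y) :
    ∫⁻ z, ENNReal.ofReal (s z ^ (-a) * (s z + y)⁻¹) ∂m ≤
      C * ENNReal.ofReal (y ^ (-a) / (a * (1 - a))) := by
  refine (h.lintegral_comp_le (φ := fun x ↦ x ^ (-a) * (x + y)⁻¹) (by fun_prop) ?_ ?_).trans
    (by gcongr; exact lintegral_Ioi_zero_rpow_mul_inv_add_le ha0 ha1 hy)
  · intro x (hx : 0 < x) x' (hx' : 0 < x') hxx'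
    exact mul_le_mul (Real.rpow_le_rpow_of_nonpos hx hxx' (by linarith)) (by gcongr)
      (by positivity) (by positivity)
  · intro x (hx : 0 < x)
    positivity

lemma lintegral_inv_add_mul_weight_le {p q : ℝ} (hpq : p.HolderConjugate q)
    (h : HasLinearSublevels m s C) {y : ℝ} (hy : 0 < y) :
    ∫⁻ z, ENNReal.ofReal (s z + y)⁻¹ * ENNReal.ofReal (s z ^ (-(1 / (p * q)))) ^ q ∂m ≤
      C * ENNReal.ofReal (p * q) * ENNReal.ofReal (y ^ (-(1 / (p * q)))) ^ q := by
  have hp := hpq.pos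
  have hq := hpq.symm.pos
  have weight_rpow : ∀ x : ℝ, 0 < x →
      ENNReal.ofReal (x ^ (-(1 / (p * q)))) ^ q = ENNReal.ofReal (x ^ (-(1 / p))) := fun x hx ↦ by
    rw [ENNReal.ofReal_rpow_of_nonneg (by positivity) hq.le, ← Real.rpow_mul hx.le]
    congr 2
    field_simp
  have const_eq : 1 / p * (1 - 1 / p) = (p * q)⁻¹ := by
    rw [one_div, hpq.one_sub_inv, mul_inv]
  calc ∫⁻ z, ENNReal.ofReal (s z + y)⁻¹ * ENNReal.ofReal (s z ^ (-(1 / (p * q)))) ^ q ∂m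
      = ∫⁻ z, ENNReal.ofReal (s z ^ (-(1 / p)) * (s z + y)⁻¹) ∂m := by
        refine lintegral_congr_ae (h.ae_pos.mono fun z hz ↦ ?_)
        beta_reduce
        rw [weight_rpow _ hz, ENNReal.ofReal_mul (by positivity), mul_comm]
    _ ≤ C * ENNReal.ofReal (y ^ (-(1 / p)) / (1 / p * (1 - 1 / p))) :=
        h.lintegral_rpow_mul_inv_add_le (by positivity) ((div_lt_one hp).2 hpq.lt) hy
    _ = C * ENNReal.ofReal (p * q) * ENNReal.ofReal (y ^ (-(1 / (p * q)))) ^ q := by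
        rw [weight_rpow y hy, const_eq, div_inv_eq_mul, mul_comm (y ^ _),
          ENNReal.ofReal_mul (by positivity), mul_assoc]

theorem hilbert_inequality [SFinite m] [SFinite n] {p q : ℝ} (hpq : p.HolderConjugate q)
    (hs : HasLinearSublevels m s C) (hu : HasLinearSublevels n u D) {g : Y → ℝ≥0∞}
    (hg : AEMeasurable g n) :
    ∫⁻ x, (∫⁻ y, ENNReal.ofReal (s x + u y)⁻¹ * g y ∂n) ^ p ∂m ≤
      C * D ^ (p / q) * ENNReal.ofReal (p * q) ^ p * ∫⁻ y, g y ^ p ∂n := by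
  have hsm := hs.measurable
  have hum := hu.measurable
  have hp := hpq.pos
  have hq := hpq.symm.pos
  have const_eq : C * D ^ (p / q) * ENNReal.ofReal (p * q) ^ p =
      (D * ENNReal.ofReal (p * q)) ^ (p / q) * (C * ENNReal.ofReal (p * q)) := by
    have exponent : p = p / q + 1 := by rw [hpq.div_conj_eq_sub_one, sub_add_cancel]
    nth_rw 3 [exponent]
    rw [ENNReal.rpow_add _ _ (by positivity) ofReal_ne_top, ENNReal.rpow_one,
      ENNReal.mul_rpow_of_nonneg _ _ (by positivity)]
    ring
  rw [const_eq]
  refine schur_test hpq (K := fun x y ↦ ENNReal.ofReal (s x + u y)⁻¹)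
    (φ := fun x ↦ ENNReal.ofReal (s x ^ (-(1 / (p * q)))))
    (ψ := fun y ↦ ENNReal.ofReal (u y ^ (-(1 / (p * q))))) (by fun_prop) (by fun_prop)
    (by fun_prop) ?_ (ae_of_all _ fun _ ↦ ofReal_ne_top) ?_ ?_ hg
  · filter_upwards [hu.ae_pos] with y hy
    exact (ENNReal.ofReal_pos.2 (by positivity)).ne'
  · filter_upwards [hs.ae_pos] with x hx
    simpa only [add_comm] using hu.lintegral_inv_add_mul_weight_le hpq hx
  · filter_upwards [hu.ae_pos] with y hy
    simpa only [mul_comm q p] using hs.lintegral_inv_add_mul_weight_le hpq.symm hy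

end HasLinearSublevels

end LinearSublevels

section PointMass

open scoped NNReal

variable {X : Type*} [MeasurableSpace X]

lemma hasLinearSublevels_smul_dirac {s : X → ℝ} (hs : Measurable s) (a : X) :
    HasLinearSublevels (ENNReal.ofReal (s a) • Measure.dirac a) s 1 where
  measurable := hs
  measure_le x := by
    rw [Measure.smul_apply, Measure.dirac_apply' _ (measurableSet_le hs measurable_const),
      smul_eq_mul, ENNReal.coe_one, one_mul]
    by_cases h : s a ≤ x
    · simpa [indicator, h] using ENNReal.ofReal_le_ofReal h
    · simp [indicator, h]

namespace HasLinearSublevels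

variable {m : Measure X} {s : X → ℝ} {C : ℝ≥0}

lemma restrict (h : HasLinearSublevels m s C) (S : Set X) :
    HasLinearSublevels (m.restrict S) s C where
  measurable := h.measurable
  measure_le x := (Measure.restrict_apply_le _ _).trans (h.measure_le x)

lemma lintegral_inv_add_rpow_le [SFinite m] {p q : ℝ} (hpq : p.HolderConjugate q)
    (h : HasLinearSublevels m s C) {y : ℝ} (hy : 0 < y) :
    ∫⁻ x, ENNReal.ofReal (s x + y)⁻¹ ^ p ∂m ≤ C * ENNReal.ofReal (p * q * y ^ (-(1 / q))) ^ p := by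
  have hp := hpq.pos
  have hq := hpq.symm.pos
  have hy' : ENNReal.ofReal y ≠ 0 := (ENNReal.ofReal_pos.2 hy).ne'
  have hilbert := h.hilbert_inequality hpq (hasLinearSublevels_smul_dirac measurable_id y)
    (aemeasurable_const (b := (ENNReal.ofReal y)⁻¹))
  simp only [id_eq, lintegral_smul_measure, lintegral_dirac, smul_eq_mul,
    mul_left_comm (ENNReal.ofReal y), ENNReal.mul_inv_cancel hy' ofReal_ne_top, mul_one,
    ENNReal.coe_one, ENNReal.one_rpow] at hilbert
  refine hilbert.trans_eq ?_
  have exponent : 1 + -p = -(1 / q) * p := by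
    have := hpq.div_conj_eq_sub_one
    field_simp at this ⊢
    linarith
  rw [ENNReal.ofReal_mul (p := p * q) (by positivity), ENNReal.mul_rpow_of_nonneg _ _ hp.le,
    ← ENNReal.ofReal_rpow_of_pos hy, ← ENNReal.rpow_mul, ← exponent,
    ENNReal.rpow_add _ _ hy' ofReal_ne_top, ENNReal.rpow_one, ENNReal.inv_rpow, ENNReal.rpow_neg,
    mul_assoc]

end HasLinearSublevels

end PointMass

section Instances

open scoped Real

lemma hasLinearSublevels_of_carleson {μ : Measure ℝ} [IsFiniteMeasure μ] {C : ℝ} (hC : 0 < C)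
    (h : ∀ t ∈ Ico (0 : ℝ) 1, (μ (Ico t 1)).toReal ≤ C * (1 - t) ^ (1 : ℝ)) :
    HasLinearSublevels (μ.restrict (Ico 0 1)) (fun t ↦ 1 - t) C.toNNReal where
  measurable := by fun_prop
  measure_le x := by
    have sublevel_eq : {t : ℝ | 1 - t ≤ x} ∩ Ico 0 1 = Ico (max 0 (1 - x)) 1 := by
      ext t
      simp only [mem_inter_iff, mem_ofPred_eq, mem_Ico, sup_le_iff, sub_le_comm (a := (1 : ℝ))]
      tauto
    rw [Measure.restrict_apply (measurableSet_le (by fun_prop) measurable_const), sublevel_eq]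
    obtain hx | hx := le_or_gt x 0
    · simp [Ico_eq_empty_of_le (show 1 ≤ max 0 (1 - x) from le_max_of_le_right (by linarith))]
    · have carleson := h (max 0 (1 - x)) ⟨le_max_left _ _, max_lt one_pos (by linarith)⟩
      rw [Real.rpow_one] at carleson
      change _ ≤ ENNReal.ofReal C * ENNReal.ofReal x
      rw [← ENNReal.ofReal_mul hC.le]
      refine ENNReal.le_ofReal_iff_toReal_le (measure_ne_top _ _) (by positivity) |>.2
        (carleson.trans ?_)
      gcongr
      linarith [le_max_right 0 (1 - x)]

/-- Normalised arc length on the unit circle, carried to `(0, 2π]` by `θ ↦ exp (θ * I)`. -/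
def arcMeasure : Measure ℝ :=
  (ENNReal.ofReal (2 * π))⁻¹ • volume.restrict (Ioc 0 (2 * π))

instance : IsProbabilityMeasure arcMeasure where
  measure_univ := by
    simpa [arcMeasure] using ENNReal.inv_mul_cancel
      (ENNReal.ofReal_pos.2 Real.two_pi_pos).ne' ofReal_ne_top

lemma integral_arcMeasure {E : Type*} [NormedAddCommGroup E] [NormedSpace ℝ E] (g : ℝ → E) :
    ∫ θ, g θ ∂arcMeasure = (2 * π)⁻¹ • ∫ θ in (0 : ℝ)..(2 * π), g θ := by
  rw [arcMeasure, integral_smul_measure, ENNReal.toReal_inv,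
    ENNReal.toReal_ofReal Real.two_pi_pos.le, intervalIntegral.integral_of_le Real.two_pi_pos.le]

lemma two_div_pi_mul_min_le_norm_one_sub_exp {θ : ℝ} (hθ : θ ∈ Icc 0 (2 * π)) :
    2 / π * min θ (2 * π - θ) ≤ ‖1 - Complex.exp (θ * Complex.I)‖ := by
  rw [norm_sub_rev, mul_comm (θ : ℂ), Complex.norm_exp_I_mul_ofReal_sub_one, norm_mul,
    Real.norm_ofNat, Real.norm_eq_abs]
  obtain ⟨h0, h1⟩ := hθ
  have jordan : 2 / π * (min θ (2 * π - θ) / 2) ≤ Real.sin (θ / 2) := by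
    obtain h | h := le_total θ (2 * π - θ)
    · rw [min_eq_left h]
      exact Real.mul_le_sin (by linarith) (by linarith)
    · rw [min_eq_right h, ← Real.sin_pi_sub, show π - θ / 2 = (2 * π - θ) / 2 by ring]
      exact Real.mul_le_sin (by linarith) (by linarith)
  linarith [le_abs_self (Real.sin (θ / 2))]

lemma hasLinearSublevels_arcMeasure :
    HasLinearSublevels arcMeasure (fun θ ↦ ‖1 - Complex.exp (θ * Complex.I)‖) 1 where
  measurable := by fun_prop
  measure_le x := by
    have sublevel_subset : {θ : ℝ | ‖1 - Complex.exp (θ * Complex.I)‖ ≤ x} ∩ Ioc 0 (2 * π) ⊆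
        Icc 0 (π * x) ∪ Icc (2 * π - π * x) (2 * π) := by
      rintro θ ⟨hθx : _ ≤ x, hθ⟩
      have min_le : min θ (2 * π - θ) ≤ π * x := by
        have := (two_div_pi_mul_min_le_norm_one_sub_exp (Ioc_subset_Icc_self hθ)).trans hθx
        have hx : 0 ≤ x := (norm_nonneg _).trans hθx
        rw [div_mul_eq_mul_div, div_le_iff₀ Real.pi_pos] at this
        nlinarith [Real.pi_pos]
      obtain h | h := min_le_iff.1 min_le
      · exact Or.inl ⟨hθ.1.le, h⟩
      · exact Or.inr ⟨by linarith, hθ.2⟩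
    have volume_le : volume ({θ : ℝ | ‖1 - Complex.exp (θ * Complex.I)‖ ≤ x} ∩
        Ioc 0 (2 * π)) ≤ ENNReal.ofReal (2 * π) * ENNReal.ofReal x := by
      refine (measure_mono sublevel_subset).trans ((measure_union_le _ _).trans_eq ?_)
      rw [Real.volume_Icc, Real.volume_Icc, sub_zero, _root_.sub_sub_cancel, ← two_mul,
        ENNReal.ofReal_mul Real.pi_pos.le, ENNReal.ofReal_mul zero_le_two, ofReal_ofNat, mul_assoc]
    rw [arcMeasure, Measure.smul_apply, smul_eq_mul,
      Measure.restrict_apply (measurableSet_le (by fun_prop) measurable_const), ENNReal.coe_one,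
      one_mul]
    rwa [ENNReal.inv_mul_le_iff (ENNReal.ofReal_pos.2 Real.two_pi_pos).ne' ofReal_ne_top]

lemma one_sub_add_norm_one_sub_le_norm_one_sub_mul {e : ℂ} (he : ‖e‖ = 1) {t : ℝ}
    (ht : t ∈ Icc (0 : ℝ) 1) : 1 - t + ‖1 - e‖ ≤ 3 * ‖1 - t * e‖ := by
  have radial : 1 - t ≤ ‖1 - t * e‖ := by
    simpa [he, abs_of_nonneg ht.1] using norm_sub_norm_le (1 : ℂ) (t * e)
  have angular : ‖1 - e‖ ≤ ‖1 - t * e‖ + (1 - t) :=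
    calc ‖1 - e‖ = ‖(1 - t * e) - (1 - t : ℝ) * e‖ := by push_cast; ring_nf
      _ ≤ ‖1 - t * e‖ + ‖((1 - t : ℝ) : ℂ) * e‖ := norm_sub_le _ _
      _ = ‖1 - t * e‖ + (1 - t) := by
        rw [norm_mul, he, mul_one, Complex.norm_of_nonneg (by linarith [ht.2])]
  linarith

lemma norm_sub_ofReal_eq_norm_one_sub_mul {e : ℂ} (he : ‖e‖ = 1) (t : ℝ) :
    ‖e - t‖ = ‖1 - t * e‖ := by
  have he0 : e ≠ 0 := norm_pos_iff.1 (he ▸ one_pos)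
  rw [← RCLike.norm_conj (1 - t * e)]
  simp only [map_sub, map_one, map_mul, Complex.conj_ofReal, ← Complex.inv_eq_conj he]
  rw [← one_mul ‖1 - _‖, ← he, ← norm_mul, mul_sub, mul_left_comm, mul_inv_cancel₀ he0, mul_one,
    mul_one]

lemma ofReal_inv_norm_one_sub_mul_exp_le (θ : ℝ) {t : ℝ} (ht : t ∈ Ico (0 : ℝ) 1) :
    ENNReal.ofReal ‖1 - t * Complex.exp (θ * Complex.I)‖⁻¹ ≤
      3 * ENNReal.ofReal (‖1 - Complex.exp (θ * Complex.I)‖ + (1 - t))⁻¹ := by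
  have ht' : 0 < 1 - t := by linarith [ht.2]
  have kernel := one_sub_add_norm_one_sub_le_norm_one_sub_mul (Complex.norm_exp_ofReal_mul_I θ)
    (Ico_subset_Icc_self ht)
  rw [← ofReal_ofNat, ← ENNReal.ofReal_mul zero_le_three]
  gcongr
  rw [← div_eq_mul_inv, inv_le_comm₀ (by linarith [norm_nonneg (1 - Complex.exp (θ * Complex.I))])
    (by positivity), inv_div]
  linarith

end Instances

section HardySpace

open Filter
open scoped NNReal Topology

variable {p : ℝ} {f : ℂ → ℂ}

lemma ofReal_mul_exp_mem_ball {r : ℝ} (hr : r ∈ Ico (0 : ℝ) 1) (θ : ℝ) :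
    (r : ℂ) * Complex.exp (θ * Complex.I) ∈ ball (0 : ℂ) 1 := by
  simpa [Complex.norm_exp_ofReal_mul_I, abs_of_nonneg hr.1] using hr.2

lemma ofReal_mem_ball {t : ℝ} (ht : t ∈ Ico (0 : ℝ) 1) : (t : ℂ) ∈ ball (0 : ℂ) 1 := by
  simpa [abs_of_nonneg ht.1] using ht.2

lemma continuous_comp_circle (hf : ContinuousOn f (ball 0 1)) {r : ℝ} (hr : r ∈ Ico (0 : ℝ) 1) :
    Continuous fun θ : ℝ ↦ f (r * Complex.exp (θ * Complex.I)) :=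
  hf.comp_continuous (by fun_prop) (ofReal_mul_exp_mem_ball hr)

lemma integrable_arcMeasure_of_continuous {E : Type*} [NormedAddCommGroup E] {g : ℝ → E}
    (hg : Continuous g) : Integrable g arcMeasure :=
  (hg.integrableOn_Ioc (μ := volume)).smul_measure
    (ENNReal.inv_ne_top.2 (ENNReal.ofReal_pos.2 Real.two_pi_pos).ne')

lemma circMean_eq_integral_arcMeasure (p : ℝ) (f : ℂ → ℂ) (r : ℝ) :
    circMean p f r =
      (∫ θ, ‖f (r * Complex.exp (θ * Complex.I))‖ ^ p ∂arcMeasure) ^ (1 / p) := by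
  rw [integral_arcMeasure, smul_eq_mul, circMean]

lemma circMean_nonneg (p : ℝ) (f : ℂ → ℂ) (r : ℝ) : 0 ≤ circMean p f r := by
  rw [circMean_eq_integral_arcMeasure]
  exact Real.rpow_nonneg (integral_nonneg fun θ ↦ by positivity) _

lemma ofReal_circMean_rpow (hp : 0 < p) (hf : ContinuousOn f (ball 0 1)) {r : ℝ}
    (hr : r ∈ Ico (0 : ℝ) 1) : ENNReal.ofReal (circMean p f r) ^ p =
      ∫⁻ θ, ‖f (r * Complex.exp (θ * Complex.I))‖ₑ ^ p ∂arcMeasure := by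
  have integrable : Integrable (fun θ : ℝ ↦ ‖f (r * Complex.exp (θ * Complex.I))‖ ^ p) arcMeasure :=
    integrable_arcMeasure_of_continuous
      ((continuous_comp_circle hf hr).norm.rpow_const fun _ ↦ Or.inr hp.le)
  have nonneg (θ : ℝ) : 0 ≤ ‖f (r * Complex.exp (θ * Complex.I))‖ ^ p := by positivity
  rw [ENNReal.ofReal_rpow_of_nonneg (circMean_nonneg p f r) hp.le, circMean_eq_integral_arcMeasure,
    ← Real.rpow_mul (integral_nonneg nonneg), one_div_mul_cancel hp.ne', Real.rpow_one,
    ofReal_integral_eq_lintegral_ofReal integrable (ae_of_all _ nonneg)]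
  simp_rw [← ENNReal.ofReal_rpow_of_nonneg (norm_nonneg _) hp.le, ofReal_norm]

namespace MemHardy

lemma continuousOn (hf : MemHardy p f) : ContinuousOn f (ball 0 1) := hf.1.continuousOn

lemma circMean_le_hardyNorm (hf : MemHardy p f) {r : ℝ} (hr : r ∈ Ico (0 : ℝ) 1) :
    circMean p f r ≤ hardyNorm p f := by
  obtain ⟨M, hM⟩ := hf.2
  refine le_csSup ⟨M, ?_⟩ ⟨r, hr, rfl⟩
  rintro _ ⟨r, hr, rfl⟩
  exact hM r hr

lemma hardyNorm_nonneg (hf : MemHardy p f) : 0 ≤ hardyNorm p f :=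
  (circMean_nonneg p f 0).trans (hf.circMean_le_hardyNorm ⟨le_rfl, one_pos⟩)

lemma lintegral_arcMeasure_le (hp : 0 < p) (hf : MemHardy p f) {r : ℝ} (hr : r ∈ Ico (0 : ℝ) 1) :
    ∫⁻ θ, ‖f (r * Complex.exp (θ * Complex.I))‖ₑ ^ p ∂arcMeasure ≤
      ENNReal.ofReal (hardyNorm p f) ^ p := by
  rw [← ofReal_circMean_rpow hp hf.continuousOn hr]
  gcongr
  exact hf.circMean_le_hardyNorm hr

end MemHardy

lemma memHardy_and_hardyNorm_le (hp : 0 < p) (hf : DifferentiableOn ℂ f (ball 0 1)) {M : ℝ}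
    (hM0 : 0 ≤ M) (hM : ∀ r ∈ Ico (0 : ℝ) 1,
      ∫⁻ θ, ‖f (r * Complex.exp (θ * Complex.I))‖ₑ ^ p ∂arcMeasure ≤ ENNReal.ofReal M ^ p) :
    MemHardy p f ∧ hardyNorm p f ≤ M := by
  have circMean_le (r : ℝ) (hr : r ∈ Ico (0 : ℝ) 1) : circMean p f r ≤ M := by
    have := hM r hr
    rwa [← ofReal_circMean_rpow hp hf.continuousOn hr, ENNReal.rpow_le_rpow_iff hp,
      ENNReal.ofReal_le_ofReal_iff hM0] at this
  refine ⟨⟨hf, M, circMean_le⟩, csSup_le ⟨_, 0, ⟨le_rfl, one_pos⟩, rfl⟩ ?_⟩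
  rintro _ ⟨r, hr, rfl⟩
  exact circMean_le r hr

lemma enorm_apply_mul_le_lintegral (hf : DifferentiableOn ℂ f (ball 0 1)) {R : ℝ}
    (hR : R ∈ Ioo (0 : ℝ) 1) {w : ℂ} (hw : w ∈ ball (0 : ℂ) 1) :
    ‖f (R * w)‖ₑ ≤ ∫⁻ θ, ENNReal.ofReal ‖Complex.exp (θ * Complex.I) - w‖⁻¹ *
      ‖f (R * Complex.exp (θ * Complex.I))‖ₑ ∂arcMeasure := by
  have hR0 : (R : ℂ) ≠ 0 := by exact_mod_cast hR.1.ne'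
  have hRw : (R : ℂ) * w ∈ ball (0 : ℂ) |R| := by
    rw [mem_ball_zero_iff] at hw ⊢
    rw [norm_mul, Complex.norm_real, Real.norm_eq_abs]
    exact mul_lt_of_lt_one_right (abs_pos.2 hR.1.ne') hw
  have hfR : DiffContOnCl ℂ f (ball 0 |R|) := hf.diffContOnCl_ball (by
    rw [abs_of_pos hR.1]; exact closedBall_subset_ball hR.2)
  have kernel (θ : ℝ) : ‖circleMap 0 R θ / (circleMap 0 R θ - R * w)‖ₑ =
      ENNReal.ofReal ‖Complex.exp (θ * Complex.I) - w‖⁻¹ := by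
    rw [circleMap_zero, ← mul_sub, mul_div_mul_left _ _ hR0, ← ofReal_norm, norm_div,
      Complex.norm_exp_ofReal_mul_I, one_div]
  calc ‖f (R * w)‖ₑ
      = ‖∫ θ, (circleMap 0 R θ / (circleMap 0 R θ - R * w)) • f (circleMap 0 R θ)
          ∂arcMeasure‖ₑ := by
        rw [integral_arcMeasure, ← hfR.circleAverage_smul_div hRw, Real.circleAverage_def]
        simp only [sub_zero]
    _ ≤ ∫⁻ θ, ‖(circleMap 0 R θ / (circleMap 0 R θ - R * w)) • f (circleMap 0 R θ)‖ₑ ∂arcMeasure :=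
        enorm_integral_le_lintegral_enorm _
    _ = ∫⁻ θ, ENNReal.ofReal ‖Complex.exp (θ * Complex.I) - w‖⁻¹ *
          ‖f (R * Complex.exp (θ * Complex.I))‖ₑ ∂arcMeasure := by
        simp only [enorm_smul, kernel]
        simp only [circleMap_zero]

lemma tendsto_apply_mul_nhdsLT_one (hf : ContinuousOn f (ball 0 1)) {w : ℂ}
    (hw : w ∈ ball (0 : ℂ) 1) : Tendsto (fun R : ℝ ↦ f (R * w)) (𝓝[<] 1) (𝓝 (f w)) := by
  have tendsto_mul : Tendsto (fun R : ℝ ↦ (R : ℂ) * w) (𝓝[<] 1) (𝓝 w) := by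
    have : ContinuousAt (fun R : ℝ ↦ (R : ℂ) * w) 1 := by fun_prop
    simpa [ContinuousAt] using this.tendsto.mono_left nhdsWithin_le_nhds
  exact (hf.continuousAt (isOpen_ball.mem_nhds hw)).tendsto.comp tendsto_mul

lemma MemHardy.carleson_embedding_dilation {q : ℝ} (hpq : p.HolderConjugate q) {ν : Measure ℝ}
    [SFinite ν] {C : ℝ≥0} (hν : HasLinearSublevels (ν.restrict (Ico 0 1)) (fun t ↦ 1 - t) C)
    (hf : MemHardy p f) {R : ℝ} (hR : R ∈ Ioo (0 : ℝ) 1) :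
    ∫⁻ t in Ico (0 : ℝ) 1, ‖f (R * t)‖ₑ ^ p ∂ν ≤
      C * ENNReal.ofReal (3 * (p * q) * hardyNorm p f) ^ p := by
  have hp := hpq.pos
  have hq := hpq.symm.pos
  have hR' : R ∈ Ico (0 : ℝ) 1 := Ioo_subset_Ico_self hR
  set F : ℝ → ℝ≥0∞ := fun θ ↦ ‖f (R * Complex.exp (θ * Complex.I))‖ₑ
  have hF : AEMeasurable F arcMeasure :=
    (continuous_comp_circle hf.continuousOn hR').enorm.measurable.aemeasurable
  calc ∫⁻ t in Ico (0 : ℝ) 1, ‖f (R * t)‖ₑ ^ p ∂ν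
      ≤ ∫⁻ t in Ico (0 : ℝ) 1, 3 ^ p * (∫⁻ θ, ENNReal.ofReal
          (1 - t + ‖1 - Complex.exp (θ * Complex.I)‖)⁻¹ * F θ ∂arcMeasure) ^ p ∂ν := by
        refine setLIntegral_mono' measurableSet_Ico fun t ht ↦ ?_
        rw [← ENNReal.mul_rpow_of_nonneg _ _ hp.le, ← lintegral_const_mul' _ _ ofNat_ne_top]
        gcongr
        refine (enorm_apply_mul_le_lintegral hf.1 hR (ofReal_mem_ball ht)).trans
          (lintegral_mono fun θ ↦ ?_)
        rw [norm_sub_ofReal_eq_norm_one_sub_mul (Complex.norm_exp_ofReal_mul_I θ), ← mul_assoc,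
          add_comm]
        gcongr
        exact ofReal_inv_norm_one_sub_mul_exp_le θ ht
    _ ≤ 3 ^ p * (C * (1 : ℝ≥0) ^ (p / q) * ENNReal.ofReal (p * q) ^ p *
          ∫⁻ θ, F θ ^ p ∂arcMeasure) := by
        rw [lintegral_const_mul' _ _ (by finiteness)]
        gcongr
        exact hν.hilbert_inequality hpq hasLinearSublevels_arcMeasure hF
    _ ≤ 3 ^ p * (C * (1 : ℝ≥0) ^ (p / q) * ENNReal.ofReal (p * q) ^ p *
          ENNReal.ofReal (hardyNorm p f) ^ p) := by
        gcongr
        exact hf.lintegral_arcMeasure_le hp hR'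
    _ = C * ENNReal.ofReal (3 * (p * q) * hardyNorm p f) ^ p := by
        rw [ENNReal.ofReal_mul (p := 3 * (p * q)) (by positivity),
          ENNReal.ofReal_mul (p := 3) (by positivity), ofReal_ofNat,
          ENNReal.mul_rpow_of_nonneg _ _ hp.le, ENNReal.mul_rpow_of_nonneg _ _ hp.le,
          ENNReal.coe_one, ENNReal.one_rpow]
        ring

theorem MemHardy.carleson_embedding {q : ℝ} (hpq : p.HolderConjugate q) {ν : Measure ℝ}
    [SFinite ν] {C : ℝ≥0} (hν : HasLinearSublevels (ν.restrict (Ico 0 1)) (fun t ↦ 1 - t) C)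
    (hf : MemHardy p f) :
    ∫⁻ t in Ico (0 : ℝ) 1, ‖f t‖ₑ ^ p ∂ν ≤
      C * ENNReal.ofReal (3 * (p * q) * hardyNorm p f) ^ p := by
  obtain ⟨R, -, hR, hR1⟩ := exists_seq_strictMono_tendsto' (zero_lt_one (α := ℝ))
  have hR1' : Tendsto R atTop (𝓝[<] 1) :=
    tendsto_nhdsWithin_iff.2 ⟨hR1, Eventually.of_forall fun k ↦ (hR k).2⟩
  have measurable (k : ℕ) :
      AEMeasurable (fun t : ℝ ↦ ‖f (R k * t)‖ₑ ^ p) (ν.restrict (Ico 0 1)) := by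
    have continuousOn : ContinuousOn (fun t : ℝ ↦ f (R k * t)) (Ico 0 1) :=
      hf.continuousOn.comp (by fun_prop) fun t ht ↦ by
        rw [← Complex.ofReal_mul]
        exact ofReal_mem_ball ⟨mul_nonneg (hR k).1.le ht.1,
          (mul_le_of_le_one_left ht.1 (hR k).2.le).trans_lt ht.2⟩
    exact (continuousOn.aestronglyMeasurable measurableSet_Ico).enorm.pow_const p
  calc ∫⁻ t in Ico (0 : ℝ) 1, ‖f t‖ₑ ^ p ∂ν
      = ∫⁻ t in Ico (0 : ℝ) 1, liminf (fun k ↦ ‖f (R k * t)‖ₑ ^ p) atTop ∂ν := by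
        refine setLIntegral_congr_fun measurableSet_Ico fun t ht ↦ ?_
        exact (((tendsto_apply_mul_nhdsLT_one hf.continuousOn (ofReal_mem_ball ht)).comp
          hR1').enorm.ennrpow_const p).liminf_eq.symm
    _ ≤ liminf (fun k ↦ ∫⁻ t in Ico (0 : ℝ) 1, ‖f (R k * t)‖ₑ ^ p ∂ν) atTop :=
        lintegral_liminf_le' measurable
    _ ≤ C * ENNReal.ofReal (3 * (p * q) * hardyNorm p f) ^ p :=
        liminf_le_of_le (by isBoundedDefault) fun b hb ↦
          let ⟨k, hk⟩ := hb.exists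
          hk.trans (hf.carleson_embedding_dilation hpq hν (hR k))

end HardySpace

section TaylorCoefficients

open scoped Real

variable {f : ℂ → ℂ}

lemma hasSum_tc {ρ : ℝ} (hf : DifferentiableOn ℂ f (ball 0 ρ)) {z : ℂ} (hz : z ∈ ball (0 : ℂ) ρ) :
    HasSum (fun k ↦ tc f k * z ^ k) (f z) := by
  refine (Complex.hasSum_taylorSeries_on_ball hf hz).congr_fun fun k ↦ ?_
  rw [tc, sub_zero, smul_eq_mul, smul_eq_mul]
  ring

lemma summable_norm_tc_mul_pow {ρ : ℝ} (hf : DifferentiableOn ℂ f (ball 0 ρ)) {z : ℂ}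
    (hz : z ∈ ball (0 : ℂ) ρ) : Summable fun k ↦ ‖tc f k * z ^ k‖ :=
  (hasSum_tc hf hz).summable.norm

lemma fourier_neg_eq_inv_exp_pow (n : ℕ) (θ : ℝ) :
    fourier (-n : ℤ) (θ : AddCircle (2 * π - 0)) = (Complex.exp (θ * Complex.I) ^ n)⁻¹ := by
  have hπ : (π : ℂ) ≠ 0 := by exact_mod_cast Real.pi_ne_zero
  rw [fourier_coe_apply, ← Complex.exp_nat_mul, ← Complex.exp_neg]
  congr 1
  push_cast
  field_simp
  ring

lemma fourierCoeffOn_circle_eq (hf : DifferentiableOn ℂ f (ball 0 1)) {r : ℝ}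
    (hr : r ∈ Ioo (0 : ℝ) 1) (n : ℕ) :
    fourierCoeffOn Real.two_pi_pos (fun θ : ℝ ↦ f (r * Complex.exp (θ * Complex.I))) n =
      tc f n * r ^ n := by
  have hr0 : (r : ℂ) ≠ 0 := by exact_mod_cast hr.1.ne'
  have cauchy := (hf.diffContOnCl_ball
    (closedBall_subset_ball hr.2)).circleIntegral_one_div_sub_center_pow_smul hr.1 n
  have integrand (θ : ℝ) : deriv (circleMap 0 r) θ • (1 / (circleMap 0 r θ - 0) ^ (n + 1)) •
      f (circleMap 0 r θ) = (Complex.I / r ^ n) * (fourier (-n : ℤ) (θ : AddCircle (2 * π - 0)) •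
        f (r * Complex.exp (θ * Complex.I))) := by
    have exp_ne := Complex.exp_ne_zero (θ * Complex.I)
    rw [fourier_neg_eq_inv_exp_pow, deriv_circleMap, circleMap_zero, sub_zero, smul_eq_mul,
      smul_eq_mul, smul_eq_mul, mul_pow]
    field_simp
    ring
  simp_rw [circleIntegral, integrand, intervalIntegral.integral_const_mul] at cauchy
  rw [fourierCoeffOn_eq_integral, tc, Complex.real_smul]
  have hπ : (π : ℂ) ≠ 0 := by exact_mod_cast Real.pi_ne_zero
  rw [smul_eq_mul] at cauchy
  generalize ∫ θ in (0 : ℝ)..(2 * π), fourier (-n : ℤ) (θ : AddCircle (2 * π - 0)) •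
    f (r * Complex.exp (θ * Complex.I)) = J at cauchy ⊢
  push_cast
  field_simp at cauchy ⊢
  rw [sub_zero]
  linear_combination cauchy

lemma sum_norm_tc_sq_mul_le (hf : DifferentiableOn ℂ f (ball 0 1)) {r : ℝ}
    (hr : r ∈ Ioo (0 : ℝ) 1) (N : ℕ) :
    ∑ k ∈ Finset.range N, (‖tc f k‖ * r ^ k) ^ 2 ≤
      ∫ θ, ‖f (r * Complex.exp (θ * Complex.I))‖ ^ 2 ∂arcMeasure := by
  have continuous := continuous_comp_circle hf.continuousOn (Ioo_subset_Ico_self hr)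
  have parseval := hasSum_sq_fourierCoeffOn Real.two_pi_pos
    ((memLp_two_iff_integrable_sq_norm continuous.aestronglyMeasurable).2
      (continuous.norm.pow 2).integrableOn_Ioc)
  rw [sub_zero, ← integral_arcMeasure] at parseval
  have bessel := sum_le_hasSum ((Finset.range N).map Nat.castEmbedding)
    (fun _ _ ↦ by positivity) parseval
  simpa only [Finset.sum_map, Nat.castEmbedding_apply, fourierCoeffOn_circle_eq hf hr, norm_mul,
    norm_pow, Complex.norm_real, Real.norm_of_nonneg hr.1.le] using bessel

lemma sum_norm_tc_mul_pow_le (hf : DifferentiableOn ℂ f (ball 0 1)) {r : ℝ}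
    (hr : r ∈ Ioo (0 : ℝ) 1) (N : ℕ) :
    (∑ k ∈ Finset.range N, ‖tc f k‖ * (r ^ 2) ^ k) ^ 2 ≤
      (∫ θ, ‖f (r * Complex.exp (θ * Complex.I))‖ ^ 2 ∂arcMeasure) * (1 - r ^ 2)⁻¹ := by
  have hr2 : r ^ 2 < 1 := pow_lt_one₀ hr.1.le hr.2 two_ne_zero
  calc (∑ k ∈ Finset.range N, ‖tc f k‖ * (r ^ 2) ^ k) ^ 2
      = (∑ k ∈ Finset.range N, ‖tc f k‖ * r ^ k * r ^ k) ^ 2 := by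
        congr 2 with k
        ring
    _ ≤ (∑ k ∈ Finset.range N, (‖tc f k‖ * r ^ k) ^ 2) * ∑ k ∈ Finset.range N, (r ^ k) ^ 2 :=
        Finset.sum_mul_sq_le_sq_mul_sq _ _ _
    _ ≤ _ := by
        gcongr
        · exact sum_norm_tc_sq_mul_le hf hr N
        · simp_rw [pow_right_comm r _ 2]
          exact (summable_geometric_of_lt_one (by positivity) hr2).sum_le_tsum _
            (fun _ _ ↦ by positivity) |>.trans_eq (tsum_geometric_of_lt_one (by positivity) hr2)

end TaylorCoefficients

section Growth

open Filter
open scoped Topology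

variable {p q : ℝ} {f : ℂ → ℂ}

namespace MemHardy

lemma norm_apply_ofReal_le (hpq : p.HolderConjugate q) (hf : MemHardy p f) {a : ℝ}
    (ha : a ∈ Ico (0 : ℝ) 1) :
    ‖f a‖ ≤ 3 * (p * q) * hardyNorm p f * (1 - a) ^ (-(1 / p)) := by
  have hp := hpq.pos
  have hq := hpq.symm.pos
  have ha' : 0 < 1 - a := by linarith [ha.2]
  have hH := hf.hardyNorm_nonneg
  have embedding := hf.carleson_embedding hpq
    ((hasLinearSublevels_smul_dirac (by fun_prop : Measurable fun t : ℝ ↦ 1 - t) a).restrict _)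
  rw [Measure.restrict_smul, lintegral_smul_measure, restrict_dirac, if_pos ha, lintegral_dirac,
    smul_eq_mul, ENNReal.coe_one, one_mul, ← ofReal_norm, ENNReal.ofReal_rpow_of_nonneg
      (norm_nonneg _) hp.le, ← ENNReal.ofReal_mul ha'.le, ENNReal.ofReal_rpow_of_nonneg
      (by positivity) hp.le, ENNReal.ofReal_le_ofReal_iff (by positivity)] at embedding
  rw [← Real.rpow_le_rpow_iff (norm_nonneg _) (by positivity) hp,
    Real.mul_rpow (by positivity) (by positivity), ← Real.rpow_mul ha'.le, neg_mul,
    one_div_mul_cancel hp.ne', Real.rpow_neg_one, ← div_eq_mul_inv, le_div_iff₀ ha', mul_comm]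
  exact embedding

lemma lintegral_enorm_le (hpq : p.HolderConjugate q) (hf : MemHardy p f) {r : ℝ}
    (hr : r ∈ Ico (0 : ℝ) 1) : ∫⁻ θ, ‖f (r * Complex.exp (θ * Complex.I))‖ₑ ∂arcMeasure ≤
      ENNReal.ofReal (hardyNorm p f) := by
  have holder := lintegral_mul_rpow_le (n := arcMeasure) hpq (k := 1) (ψ := 1) aemeasurable_const
    (continuous_comp_circle hf.continuousOn hr).enorm.measurable.aemeasurable aemeasurable_const
    (by simp) (by simp)
  simp only [Pi.one_apply, one_mul, ENNReal.one_rpow, lintegral_one, measure_univ, div_one]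
    at holder
  exact (ENNReal.rpow_le_rpow_iff hpq.pos).1 (holder.trans (hf.lintegral_arcMeasure_le hpq.pos hr))

lemma norm_apply_le (hpq : p.HolderConjugate q) (hf : MemHardy p f) {w : ℂ}
    (hw : w ∈ ball (0 : ℂ) 1) : ‖f w‖ ≤ (1 - ‖w‖)⁻¹ * hardyNorm p f := by
  have hw' : 0 < 1 - ‖w‖ := by simpa using hw
  have bound_of_lt_one : ∀ᶠ R : ℝ in 𝓝[<] 1, ‖f (R * w)‖ ≤ (1 - ‖w‖)⁻¹ * hardyNorm p f := by
    filter_upwards [Ioo_mem_nhdsLT zero_lt_one] with R hR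
    rw [← ENNReal.ofReal_le_ofReal_iff (mul_nonneg (by positivity) hf.hardyNorm_nonneg),
      ofReal_norm, ENNReal.ofReal_mul (by positivity)]
    calc ‖f (R * w)‖ₑ
        ≤ ∫⁻ θ, ENNReal.ofReal ‖Complex.exp (θ * Complex.I) - w‖⁻¹ *
            ‖f (R * Complex.exp (θ * Complex.I))‖ₑ ∂arcMeasure :=
          enorm_apply_mul_le_lintegral hf.1 hR hw
      _ ≤ ∫⁻ θ, ENNReal.ofReal (1 - ‖w‖)⁻¹ *
            ‖f (R * Complex.exp (θ * Complex.I))‖ₑ ∂arcMeasure := by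
          gcongr with θ
          simpa [Complex.norm_exp_ofReal_mul_I] using
            norm_sub_norm_le (Complex.exp (θ * Complex.I)) w
      _ ≤ ENNReal.ofReal (1 - ‖w‖)⁻¹ * ENNReal.ofReal (hardyNorm p f) := by
          rw [lintegral_const_mul' _ _ ofReal_ne_top]
          gcongr
          exact hf.lintegral_enorm_le hpq (Ioo_subset_Ico_self hR)
  exact le_of_tendsto (tendsto_apply_mul_nhdsLT_one hf.continuousOn hw).norm bound_of_lt_one

lemma mono_exponent {p' : ℝ} (hp' : 0 < p') (hpp' : p' ≤ p) (hf : MemHardy p f) :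
    MemHardy p' f := by
  have hp : 0 < p := hp'.trans_le hpp'
  set M : ℝ≥0∞ := (1 + ENNReal.ofReal (hardyNorm p f) ^ p) ^ (1 / p')
  have hM : M ≠ ⊤ := by finiteness
  refine (memHardy_and_hardyNorm_le hp' hf.1 M.toReal_nonneg fun r hr ↦ ?_).1
  rw [ENNReal.ofReal_toReal hM, ← ENNReal.rpow_mul, one_div_mul_cancel hp'.ne', ENNReal.rpow_one]
  calc ∫⁻ θ, ‖f (r * Complex.exp (θ * Complex.I))‖ₑ ^ p' ∂arcMeasure
      ≤ ∫⁻ θ, (1 + ‖f (r * Complex.exp (θ * Complex.I))‖ₑ ^ p) ∂arcMeasure := by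
        gcongr with θ
        obtain h | h := le_total ‖f (r * Complex.exp (θ * Complex.I))‖ₑ 1
        · exact (ENNReal.rpow_le_one h hp'.le).trans le_self_add
        · exact (ENNReal.rpow_le_rpow_of_exponent_le h hpp').trans le_add_self
    _ ≤ 1 + ENNReal.ofReal (hardyNorm p f) ^ p := by
        rw [lintegral_add_left measurable_const, lintegral_one, measure_univ]
        gcongr
        exact hf.lintegral_arcMeasure_le hp hr

lemma integral_norm_sq_le (hpq : p.HolderConjugate q) (hp2 : p ≤ 2) (hf : MemHardy p f) {r : ℝ}
    (hr : r ∈ Ico (0 : ℝ) 1) : ∫ θ, ‖f (r * Complex.exp (θ * Complex.I))‖ ^ 2 ∂arcMeasure ≤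
      hardyNorm p f ^ 2 * (1 - r) ^ (-(2 - p)) := by
  have hH := hf.hardyNorm_nonneg
  have hr' : 0 < 1 - r := by linarith [hr.2]
  have continuous := (continuous_comp_circle hf.continuousOn hr).norm
  have hardy : ∫ θ, ‖f (r * Complex.exp (θ * Complex.I))‖ ^ p ∂arcMeasure ≤ hardyNorm p f ^ p := by
    have := hf.circMean_le_hardyNorm hr
    rwa [circMean_eq_integral_arcMeasure, one_div, Real.rpow_inv_le_iff_of_pos
      (integral_nonneg fun θ ↦ by positivity) hH hpq.pos] at this
  have pointwise (θ : ℝ) : ‖f (r * Complex.exp (θ * Complex.I))‖ ^ 2 ≤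
      ((1 - r)⁻¹ * hardyNorm p f) ^ (2 - p) * ‖f (r * Complex.exp (θ * Complex.I))‖ ^ p := by
    have growth := hf.norm_apply_le hpq (ofReal_mul_exp_mem_ball hr θ)
    rw [norm_mul, Complex.norm_exp_ofReal_mul_I, mul_one, Complex.norm_of_nonneg hr.1] at growth
    rw [← Real.rpow_two, ← sub_add_cancel 2 p,
      Real.rpow_add_of_nonneg (norm_nonneg _) (by linarith) hpq.pos.le, sub_add_cancel]
    gcongr
  calc ∫ θ, ‖f (r * Complex.exp (θ * Complex.I))‖ ^ 2 ∂arcMeasure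
      ≤ ∫ θ, ((1 - r)⁻¹ * hardyNorm p f) ^ (2 - p) *
          ‖f (r * Complex.exp (θ * Complex.I))‖ ^ p ∂arcMeasure :=
        integral_mono (integrable_arcMeasure_of_continuous (continuous.pow 2))
          (integrable_arcMeasure_of_continuous
            (continuous_const.mul (continuous.rpow_const fun _ ↦ Or.inr hpq.pos.le))) pointwise
    _ ≤ ((1 - r)⁻¹ * hardyNorm p f) ^ (2 - p) * hardyNorm p f ^ p := by
        rw [integral_const_mul]
        gcongr
    _ = hardyNorm p f ^ 2 * (1 - r) ^ (-(2 - p)) := by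
        rw [Real.mul_rpow (by positivity) hH, mul_assoc,
          ← Real.rpow_add_of_nonneg hH (by linarith) hpq.pos.le, sub_add_cancel, Real.rpow_two,
          Real.inv_rpow hr'.le, ← Real.rpow_neg hr'.le, mul_comm]

lemma tsum_norm_tc_mul_pow_le (hpq : p.HolderConjugate q) (hp2 : p ≤ 2) (hf : MemHardy p f) {t : ℝ}
    (ht : t ∈ Ico (0 : ℝ) 1) :
    ∑' k, ‖tc f k‖ * t ^ k ≤ hardyNorm p f * ((1 - t) / 2) ^ (-((3 - p) / 2)) := by
  have hH := hf.hardyNorm_nonneg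
  have ht0 := ht.1
  have ht' : 0 < (1 - t) / 2 := by linarith [ht.2]
  set r : ℝ := (1 + t) / 2
  have hr : r ∈ Ioo (0 : ℝ) 1 := ⟨by simp only [r]; linarith, by simp only [r]; linarith⟩
  have one_sub_r : 1 - r = (1 - t) / 2 := by simp only [r]; ring
  have t_le : t ≤ r ^ 2 := by simp only [r]; nlinarith [sq_nonneg (1 - t)]
  have le_one_sub_sq : (1 - t) / 2 ≤ 1 - r ^ 2 := by nlinarith [hr.1, hr.2]
  have square_sum_le (N : ℕ) : (∑ k ∈ Finset.range N, ‖tc f k‖ * t ^ k) ^ 2 ≤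
      (hardyNorm p f * ((1 - t) / 2) ^ (-((3 - p) / 2))) ^ 2 :=
    calc (∑ k ∈ Finset.range N, ‖tc f k‖ * t ^ k) ^ 2
        ≤ (∑ k ∈ Finset.range N, ‖tc f k‖ * (r ^ 2) ^ k) ^ 2 := by gcongr
      _ ≤ (∫ θ, ‖f (r * Complex.exp (θ * Complex.I))‖ ^ 2 ∂arcMeasure) * (1 - r ^ 2)⁻¹ :=
          sum_norm_tc_mul_pow_le hf.1 hr N
      _ ≤ hardyNorm p f ^ 2 * ((1 - t) / 2) ^ (-(2 - p)) * ((1 - t) / 2)⁻¹ := by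
          gcongr
          · exact inv_nonneg.2 (by linarith)
          rw [← one_sub_r]
          exact hf.integral_norm_sq_le hpq hp2 (Ioo_subset_Ico_self hr)
      _ = (hardyNorm p f * ((1 - t) / 2) ^ (-((3 - p) / 2))) ^ 2 := by
          rw [mul_pow, ← Real.rpow_mul_natCast ht'.le, mul_assoc, ← Real.rpow_neg_one ((1 - t) / 2),
            ← Real.rpow_add ht']
          push_cast
          ring_nf
  exact Real.tsum_le_of_sum_range_le (fun k ↦ by positivity) fun N ↦
    le_of_sq_le_sq (square_sum_le N) (by positivity)

end MemHardy

end Growth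

section IntegralRepresentation

open scoped NNReal

variable {p : ℝ} {f : ℂ → ℂ} {μ : Measure ℝ}

lemma HasLinearSublevels.integrable_rpow {X : Type*} [MeasurableSpace X] {m : Measure X}
    {s : X → ℝ} {C : ℝ≥0} (h : HasLinearSublevels m s C) (hs : ∀ᵐ x ∂m, s x ≤ 1) {a : ℝ}
    (ha0 : 0 < a) (ha1 : a < 1) : Integrable (fun x ↦ s x ^ (-a)) m := by
  have hsm := h.measurable
  refine (lintegral_ofReal_ne_top_iff_integrable (hsm.pow_const (-a)).aestronglyMeasurable
    (h.ae_pos.mono fun x hx ↦ Real.rpow_nonneg hx.le _)).1 (ne_top_of_le_ne_top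
      (b := 2 * (C * ENNReal.ofReal (1 ^ (-a) / (a * (1 - a))))) (by finiteness) ?_)
  calc ∫⁻ x, ENNReal.ofReal (s x ^ (-a)) ∂m
      ≤ ∫⁻ x, 2 * ENNReal.ofReal (s x ^ (-a) * (s x + 1)⁻¹) ∂m := by
        refine lintegral_mono_ae ?_
        filter_upwards [h.ae_pos, hs] with x hx hx1
        rw [← ofReal_ofNat, ← ENNReal.ofReal_mul zero_le_two]
        gcongr
        rw [mul_left_comm]
        exact le_mul_of_one_le_right (by positivity)
          ((le_mul_inv_iff₀ (by positivity)).2 (by linarith))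
    _ ≤ 2 * (C * ENNReal.ofReal (1 ^ (-a) / (a * (1 - a)))) := by
        rw [lintegral_const_mul' _ _ ofNat_ne_top]
        gcongr
        exact h.lintegral_rpow_mul_inv_add_le ha0 ha1 one_pos

lemma MemHardy.integrable_tsum_norm_tc (hp : 1 < p) (hf : MemHardy p f) {C : ℝ≥0}
    (hμ : HasLinearSublevels (μ.restrict (Ico 0 1)) (fun t ↦ 1 - t) C) :
    Integrable (fun t : ℝ ↦ ∑' k, ‖tc f k‖ * t ^ k) (μ.restrict (Ico 0 1)) := by
  set p' := min p 2
  have hp' : 1 < p' := lt_min hp one_lt_two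
  have hp'2 : p' ≤ 2 := min_le_right _ _
  have hf' : MemHardy p' f := hf.mono_exponent (by linarith) (min_le_left _ _)
  set b := (3 - p') / 2
  have power_integrable : Integrable (fun t : ℝ ↦ (1 - t) ^ (-b)) (μ.restrict (Ico 0 1)) :=
    hμ.integrable_rpow ((ae_restrict_mem measurableSet_Ico).mono fun t ht ↦ by linarith [ht.1])
      (by simp only [b]; linarith) (by simp only [b]; linarith)
  have measurable : Measurable fun t : ℝ ↦ ∑' k, ‖tc f k‖ * t ^ k :=
    Measurable.tsum fun k ↦ by fun_prop
  refine (power_integrable.const_mul (hardyNorm p' f * 2 ^ b)).mono' measurable.aestronglyMeasurable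
    ((ae_restrict_mem measurableSet_Ico).mono fun t ht ↦ ?_)
  have ht0 := ht.1
  rw [Real.norm_of_nonneg (tsum_nonneg fun k ↦ by positivity)]
  refine (hf'.tsum_norm_tc_mul_pow_le (.conjExponent hp') hp'2 ht).trans_eq ?_
  rw [Real.div_rpow (by linarith [ht.2]) zero_le_two, Real.rpow_neg zero_le_two, div_inv_eq_mul]
  ring

lemma differentiableOn_tsum_mul_pow {c : ℕ → ℂ} {M : ℝ} (hc : ∀ n, ‖c n‖ ≤ M) :
    DifferentiableOn ℂ (fun z ↦ ∑' n, c n * z ^ n) (ball 0 1) := by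
  intro z hz
  obtain ⟨ρ, hzρ, hρ⟩ := exists_between (mem_ball_zero_iff.1 hz)
  have hρ0 : 0 ≤ ρ := (norm_nonneg z).trans hzρ.le
  have differentiableOn_ball : DifferentiableOn ℂ (fun z ↦ ∑' n, c n * z ^ n) (ball 0 ρ) :=
    Complex.differentiableOn_tsum_of_summable_norm
      ((summable_geometric_of_lt_one hρ0 hρ).mul_left M) (fun n ↦ by fun_prop) isOpen_ball
      fun n w hw ↦ by
        have := (mem_ball_zero_iff.1 hw).le
        rw [norm_mul, norm_pow]
        gcongr
        · exact (norm_nonneg _).trans (hc n)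
        · exact hc n
  exact (differentiableOn_ball.differentiableAt
    (isOpen_ball.mem_nhds (mem_ball_zero_iff.2 hzρ))).differentiableWithinAt

lemma norm_apply_ofReal_le_tsum (hf : DifferentiableOn ℂ f (ball 0 1)) {t : ℝ}
    (ht : t ∈ Ico (0 : ℝ) 1) :
    ‖f t‖ ≤ ∑' k, ‖tc f k‖ * t ^ k := by
  have ht' := ofReal_mem_ball ht
  rw [← (hasSum_tc hf ht').tsum_eq]
  refine (norm_tsum_le_tsum_norm (summable_norm_tc_mul_pow hf ht')).trans_eq (tsum_congr fun k ↦ ?_)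
  rw [norm_mul, norm_pow, Complex.norm_of_nonneg ht.1]

section

variable (hf : DifferentiableOn ℂ f (ball 0 1))
  (hint : Integrable (fun t : ℝ ↦ ∑' k, ‖tc f k‖ * t ^ k) (μ.restrict (Ico 0 1)))

include hf hint

lemma integrable_apply_ofReal : Integrable (fun t : ℝ ↦ f t) (μ.restrict (Ico 0 1)) :=
  hint.mono' ((hf.continuousOn.comp Complex.continuous_ofReal.continuousOn
    fun _ ↦ ofReal_mem_ball).aestronglyMeasurable measurableSet_Ico)
    ((ae_restrict_mem measurableSet_Ico).mono fun _ ↦ norm_apply_ofReal_le_tsum hf)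

lemma hasSum_mom_mul_tc (n : ℕ) :
    HasSum (fun k ↦ (mom μ (n + k) : ℂ) * tc f k) (∫ t in Ico (0 : ℝ) 1, (t : ℂ) ^ n * f t ∂μ) := by
  have mom_mul_tc (k : ℕ) : (mom μ (n + k) : ℂ) * tc f k =
      ∫ t in Ico (0 : ℝ) 1, (t : ℂ) ^ n * (tc f k * (t : ℂ) ^ k) ∂μ := by
    rw [mom, ← integral_complex_ofReal, ← integral_mul_const]
    refine integral_congr_ae (ae_of_all _ fun t ↦ ?_)
    push_cast
    ring
  simp_rw [mom_mul_tc]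
  refine hasSum_integral_of_dominated_convergence (fun k t ↦ ‖tc f k‖ * t ^ k)
    (fun k ↦ by fun_prop) (fun k ↦ ?_) ?_ hint ?_
  all_goals filter_upwards [ae_restrict_mem measurableSet_Ico] with t ht
  · rw [norm_mul, norm_mul, norm_pow, norm_pow, Complex.norm_of_nonneg ht.1]
    exact mul_le_of_le_one_left (mul_nonneg (norm_nonneg _) (pow_nonneg ht.1 k))
      (pow_le_one₀ ht.1 ht.2.le)
  · simpa [abs_of_nonneg ht.1] using summable_norm_tc_mul_pow hf (ofReal_mem_ball ht)
  · exact (hasSum_tc hf (ofReal_mem_ball ht)).mul_left _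

lemma norm_hmuCoeff_le (n : ℕ) : ‖hmuCoeff μ f n‖ ≤ ∫ t in Ico (0 : ℝ) 1, ‖f t‖ ∂μ := by
  rw [hmuCoeff, (hasSum_mom_mul_tc hf hint n).tsum_eq]
  refine norm_integral_le_of_norm_le (integrable_apply_ofReal hf hint).norm
    ((ae_restrict_mem measurableSet_Ico).mono fun t ht ↦ ?_)
  rw [norm_mul, norm_pow, Complex.norm_of_nonneg ht.1]
  exact mul_le_of_le_one_left (norm_nonneg _) (pow_le_one₀ ht.1 ht.2.le)

lemma hmuWD_of_integrable : HmuWD μ f := by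
  refine ⟨fun n ↦ (hasSum_mom_mul_tc hf hint n).summable.norm, fun z hz ↦ ?_⟩
  refine .of_nonneg_of_le (fun n ↦ norm_nonneg _) (fun n ↦ ?_)
    ((summable_geometric_of_lt_one (norm_nonneg z) (mem_ball_zero_iff.1 hz)).mul_left
      (∫ t in Ico (0 : ℝ) 1, ‖f t‖ ∂μ))
  rw [norm_mul, norm_pow]
  gcongr
  exact norm_hmuCoeff_le hf hint n

lemma differentiableOn_hmu : DifferentiableOn ℂ (Hmu μ f) (ball 0 1) :=
  differentiableOn_tsum_mul_pow (norm_hmuCoeff_le hf hint)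

lemma hmu_eq_imu {z : ℂ} (hz : z ∈ ball (0 : ℂ) 1) : Hmu μ f z = Imu μ f z := by
  have hz' : ‖z‖ < 1 := mem_ball_zero_iff.1 hz
  have hmuCoeff_mul_pow (n : ℕ) : hmuCoeff μ f n * z ^ n =
      ∫ t in Ico (0 : ℝ) 1, f t * (t * z) ^ n ∂μ := by
    rw [hmuCoeff, (hasSum_mom_mul_tc hf hint n).tsum_eq, ← integral_mul_const]
    refine integral_congr_ae (ae_of_all _ fun t ↦ ?_)
    ring
  have norm_mul_le (t : ℝ) (ht : t ∈ Ico (0 : ℝ) 1) : ‖(t : ℂ) * z‖ ≤ ‖z‖ := by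
    rw [norm_mul, Complex.norm_of_nonneg ht.1]
    exact mul_le_of_le_one_left (norm_nonneg z) ht.2.le
  have f_integrable := integrable_apply_ofReal hf hint
  rw [Hmu, Imu]
  simp_rw [hmuCoeff_mul_pow, div_eq_mul_inv]
  refine HasSum.tsum_eq (hasSum_integral_of_dominated_convergence (fun n t ↦ ‖f t‖ * ‖z‖ ^ n)
    (fun n ↦ f_integrable.aestronglyMeasurable.mul
      (by fun_prop : Measurable fun t : ℝ ↦ ((t : ℂ) * z) ^ n).aestronglyMeasurable) (fun n ↦ ?_)
    (ae_of_all _ fun t ↦ (summable_geometric_of_lt_one (norm_nonneg z) hz').mul_left _) ?_ ?_)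
  · filter_upwards [ae_restrict_mem measurableSet_Ico] with t ht
    rw [norm_mul, norm_pow]
    gcongr
    exact norm_mul_le t ht
  · simp_rw [tsum_mul_left]
    exact f_integrable.norm.mul_const _
  · filter_upwards [ae_restrict_mem measurableSet_Ico] with t ht
    exact (hasSum_geometric_of_norm_lt_one ((norm_mul_le t ht).trans_lt hz')).mul_left (f t)

end

end IntegralRepresentation

section Sufficiency

open scoped NNReal

variable {p q : ℝ} {f : ℂ → ℂ} {μ : Measure ℝ} {C : ℝ≥0}

lemma enorm_imu_le (μ : Measure ℝ) (f : ℂ → ℂ) {r : ℝ} (hr : r ∈ Ico (0 : ℝ) 1) (θ : ℝ) :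
    ‖Imu μ f (r * Complex.exp (θ * Complex.I))‖ₑ ≤
      3 * ∫⁻ t in Ico (0 : ℝ) 1,
        ENNReal.ofReal (‖1 - Complex.exp (θ * Complex.I)‖ + (1 - t))⁻¹ * ‖f t‖ₑ ∂μ := by
  rw [← lintegral_const_mul' _ _ ofNat_ne_top]
  refine (enorm_integral_le_lintegral_enorm _).trans
    (setLIntegral_mono' measurableSet_Ico fun t ht ↦ ?_)
  have ht0 := ht.1
  have hrt : r * t ≤ t := mul_le_of_le_one_left ht0 hr.2.le
  have hrt_mem : r * t ∈ Ico (0 : ℝ) 1 := ⟨mul_nonneg hr.1 ht0, hrt.trans_lt ht.2⟩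
  have kernel := ofReal_inv_norm_one_sub_mul_exp_le θ hrt_mem
  rw [div_eq_mul_inv, mul_comm, enorm_mul, ← ofReal_norm, norm_inv, ← mul_assoc, ← mul_assoc,
    ← Complex.ofReal_mul, mul_comm t]
  gcongr
  refine kernel.trans ?_
  gcongr
  linarith [norm_nonneg (1 - Complex.exp (θ * Complex.I)), ht.2]

lemma lintegral_imu_le [SFinite μ] (hpq : p.HolderConjugate q)
    (hμ : HasLinearSublevels (μ.restrict (Ico 0 1)) (fun t ↦ 1 - t) C) (hf : MemHardy p f) {r : ℝ}
    (hr : r ∈ Ico (0 : ℝ) 1) :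
    ∫⁻ θ, ‖Imu μ f (r * Complex.exp (θ * Complex.I))‖ₑ ^ p ∂arcMeasure ≤
      ENNReal.ofReal ((3 * (p * q)) ^ 2 * C * hardyNorm p f) ^ p := by
  have hp := hpq.pos
  have hq := hpq.symm.pos
  have measurable : AEMeasurable (fun t : ℝ ↦ ‖f t‖ₑ) (μ.restrict (Ico 0 1)) :=
    ((hf.continuousOn.comp Complex.continuous_ofReal.continuousOn
      fun _ ↦ ofReal_mem_ball).aestronglyMeasurable measurableSet_Ico).enorm
  calc ∫⁻ θ, ‖Imu μ f (r * Complex.exp (θ * Complex.I))‖ₑ ^ p ∂arcMeasure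
      ≤ ∫⁻ θ, 3 ^ p * (∫⁻ t in Ico (0 : ℝ) 1,
          ENNReal.ofReal (‖1 - Complex.exp (θ * Complex.I)‖ + (1 - t))⁻¹ * ‖f t‖ₑ ∂μ) ^ p
            ∂arcMeasure := by
        gcongr with θ
        rw [← ENNReal.mul_rpow_of_nonneg _ _ hp.le]
        gcongr
        exact enorm_imu_le μ f hr θ
    _ ≤ 3 ^ p * ((1 : ℝ≥0) * C ^ (p / q) * ENNReal.ofReal (p * q) ^ p *
          ∫⁻ t in Ico (0 : ℝ) 1, ‖f t‖ₑ ^ p ∂μ) := by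
        rw [lintegral_const_mul' _ _ (by finiteness)]
        gcongr
        exact hasLinearSublevels_arcMeasure.hilbert_inequality hpq hμ measurable
    _ ≤ 3 ^ p * ((1 : ℝ≥0) * C ^ (p / q) * ENNReal.ofReal (p * q) ^ p *
          (C * ENNReal.ofReal (3 * (p * q) * hardyNorm p f) ^ p)) := by
        gcongr
        exact hf.carleson_embedding hpq hμ
    _ = ENNReal.ofReal ((3 * (p * q)) ^ 2 * C * hardyNorm p f) ^ p := by
        have C_rpow : (C : ℝ≥0∞) ^ p = C ^ (p / q) * C := by
          rw [hpq.div_conj_eq_sub_one]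
          nth_rw 1 [← sub_add_cancel p 1]
          rw [ENNReal.rpow_add_of_nonneg _ _ (by linarith [hpq.lt]) zero_le_one, ENNReal.rpow_one]
        rw [show (3 * (p * q)) ^ 2 * C * hardyNorm p f =
            3 * (p * q) * (C * (3 * (p * q) * hardyNorm p f)) by ring,
          ENNReal.ofReal_mul (p := 3 * (p * q)) (q := C * _) (by positivity),
          ENNReal.ofReal_mul C.coe_nonneg, ofReal_coe_nnreal,
          ENNReal.ofReal_mul (p := 3) (q := p * q) zero_le_three, ofReal_ofNat]
        simp only [ENNReal.mul_rpow_of_nonneg _ _ hp.le, C_rpow, ENNReal.coe_one]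
        ring

theorem hmu_memHardy_and_hardyNorm_le [SFinite μ] (hpq : p.HolderConjugate q)
    (hμ : HasLinearSublevels (μ.restrict (Ico 0 1)) (fun t ↦ 1 - t) C) (hf : MemHardy p f) :
    MemHardy p (Hmu μ f) ∧ hardyNorm p (Hmu μ f) ≤ (3 * (p * q)) ^ 2 * C * hardyNorm p f := by
  have hint := hf.integrable_tsum_norm_tc hpq.lt hμ
  refine memHardy_and_hardyNorm_le hpq.pos (differentiableOn_hmu hf.1 hint)
    (mul_nonneg (by positivity) hf.hardyNorm_nonneg) fun r hr ↦ ?_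
  simp_rw [hmu_eq_imu hf.1 hint (ofReal_mul_exp_mem_ball hr _)]
  exact lintegral_imu_le hpq hμ hf hr

end Sufficiency

section Necessity

variable {p q a : ℝ} {μ : Measure ℝ}

lemma differentiableOn_inv_one_sub_mul (ha : a ∈ Ico (0 : ℝ) 1) :
    DifferentiableOn ℂ (fun z : ℂ ↦ (1 - a * z)⁻¹) (ball 0 (2 / (1 + a))) := by
  refine DifferentiableOn.inv (by fun_prop) fun z hz ↦ sub_ne_zero.2 fun h ↦ ?_
  have ha0 := ha.1
  have : a * ‖z‖ = 1 := by simpa [abs_of_nonneg ha0] using (congrArg norm h).symm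
  rw [mem_ball_zero_iff, lt_div_iff₀ (by positivity)] at hz
  nlinarith [ha.2, norm_nonneg z]

lemma one_lt_two_div_one_add (ha : a ∈ Ico (0 : ℝ) 1) : 1 < 2 / (1 + a) := by
  rw [one_lt_div (by linarith [ha.1])]
  linarith [ha.2]

lemma memHardy_and_hardyNorm_inv_one_sub_mul_le (hpq : p.HolderConjugate q)
    (ha : a ∈ Ico (0 : ℝ) 1) : MemHardy p (fun z ↦ (1 - a * z)⁻¹) ∧
      hardyNorm p (fun z ↦ (1 - a * z)⁻¹) ≤ 3 * (p * q) * (1 - a) ^ (-(1 / q)) := by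
  have hp := hpq.pos
  have hq := hpq.symm.pos
  have ha' : 0 < 1 - a := by linarith [ha.2]
  refine memHardy_and_hardyNorm_le hp ((differentiableOn_inv_one_sub_mul ha).mono
    (ball_subset_ball (one_lt_two_div_one_add ha).le)) (by positivity) fun r hr ↦ ?_
  calc ∫⁻ θ, ‖(1 - a * (r * Complex.exp (θ * Complex.I)))⁻¹‖ₑ ^ p ∂arcMeasure
      ≤ ∫⁻ θ, 3 ^ p * ENNReal.ofReal (‖1 - Complex.exp (θ * Complex.I)‖ + (1 - a))⁻¹ ^ p
          ∂arcMeasure := by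
        gcongr with θ
        have har : a * r ≤ a := mul_le_of_le_one_right ha.1 hr.2.le
        have kernel := ofReal_inv_norm_one_sub_mul_exp_le θ
          (t := a * r) ⟨mul_nonneg ha.1 hr.1, har.trans_lt ha.2⟩
        rw [← ENNReal.mul_rpow_of_nonneg _ _ hp.le, ← mul_assoc, ← Complex.ofReal_mul,
          ← ofReal_norm, norm_inv]
        gcongr
        refine kernel.trans ?_
        gcongr
    _ ≤ 3 ^ p * ((1 : NNReal) * ENNReal.ofReal (p * q * (1 - a) ^ (-(1 / q))) ^ p) := by
        rw [lintegral_const_mul' _ _ (by finiteness)]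
        gcongr
        exact hasLinearSublevels_arcMeasure.lintegral_inv_add_rpow_le hpq ha'
    _ = ENNReal.ofReal (3 * (p * q) * (1 - a) ^ (-(1 / q))) ^ p := by
        rw [mul_assoc 3, ENNReal.ofReal_mul zero_le_three, ofReal_ofNat,
          ENNReal.mul_rpow_of_nonneg _ _ hp.le, ENNReal.coe_one, one_mul]

lemma integrable_tsum_norm_tc_inv_one_sub_mul [IsFiniteMeasure μ] (ha : a ∈ Ico (0 : ℝ) 1) :
    Integrable (fun t : ℝ ↦ ∑' k, ‖tc (fun z ↦ (1 - a * z)⁻¹) k‖ * t ^ k)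
      (μ.restrict (Ico 0 1)) := by
  have summable : Summable fun k ↦ ‖tc (fun z ↦ (1 - a * z)⁻¹) k‖ := by
    simpa using summable_norm_tc_mul_pow (differentiableOn_inv_one_sub_mul ha) (z := 1)
      (by simpa using one_lt_two_div_one_add ha)
  refine (integrable_const (∑' k, ‖tc (fun z ↦ (1 - a * z)⁻¹) k‖)).mono'
    (Measurable.tsum fun k ↦ by fun_prop).aestronglyMeasurable
    ((ae_restrict_mem measurableSet_Ico).mono fun t ht ↦ ?_)
  have ht0 := ht.1
  have term_le (k : ℕ) : ‖tc (fun z ↦ (1 - a * z)⁻¹) k‖ * t ^ k ≤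
      ‖tc (fun z ↦ (1 - a * z)⁻¹) k‖ :=
    mul_le_of_le_one_right (norm_nonneg _) (pow_le_one₀ ht0 ht.2.le)
  rw [Real.norm_of_nonneg (tsum_nonneg fun k ↦ by positivity)]
  exact (summable.of_nonneg_of_le (fun k ↦ by positivity) term_le).tsum_le_tsum term_le summable

lemma measure_Ico_div_le_norm_imu [IsFiniteMeasure μ] (ha : a ∈ Ico (0 : ℝ) 1) :
    (μ (Ico a 1)).toReal / (1 - a ^ 2) ^ 2 ≤ ‖Imu μ (fun z ↦ (1 - a * z)⁻¹) a‖ := by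
  have imu_eq : Imu μ (fun z ↦ (1 - a * z)⁻¹) a =
      ((∫ t in Ico (0 : ℝ) 1, ((1 - a * t) ^ 2)⁻¹ ∂μ : ℝ) : ℂ) := by
    rw [Imu, ← integral_complex_ofReal]
    congr with t
    push_cast
    rw [mul_comm (t : ℂ), div_eq_mul_inv, ← mul_inv, sq]
  have one_sub_pos (t : ℝ) (ht : t ∈ Icc (0 : ℝ) 1) : 0 < 1 - a * t := by
    nlinarith [ha.1, ha.2, ht.1, ht.2]
  have integrable : IntegrableOn (fun t : ℝ ↦ ((1 - a * t) ^ 2)⁻¹) (Ico 0 1) μ := by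
    refine (ContinuousOn.integrableOn_Icc ?_).mono_set Ico_subset_Icc_self
    exact ContinuousOn.inv₀ (by fun_prop) fun t ht ↦ (pow_pos (one_sub_pos t ht) 2).ne'
  rw [imu_eq, Complex.norm_of_nonneg (integral_nonneg fun t ↦ by positivity)]
  calc (μ (Ico a 1)).toReal / (1 - a ^ 2) ^ 2
      = ∫ _ in Ico a 1, ((1 - a ^ 2) ^ 2)⁻¹ ∂μ := by
        rw [setIntegral_const, smul_eq_mul, Measure.real, div_eq_mul_inv]
    _ ≤ ∫ t in Ico a 1, ((1 - a * t) ^ 2)⁻¹ ∂μ := by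
        refine setIntegral_mono_on (integrable_const _)
          (integrable.mono_set (Ico_subset_Ico_left ha.1)) measurableSet_Ico fun t ht ↦ ?_
        have := one_sub_pos t ⟨ha.1.trans ht.1, ht.2.le⟩
        gcongr
        nlinarith [ha.1, ht.1]
    _ ≤ ∫ t in Ico (0 : ℝ) 1, ((1 - a * t) ^ 2)⁻¹ ∂μ :=
        setIntegral_mono_set integrable (ae_of_all _ fun t ↦ by positivity)
          (Ico_subset_Ico_left ha.1).eventuallyLE

theorem measure_Ico_le_of_hardyNorm_hmu_le [IsFiniteMeasure μ] (hpq : p.HolderConjugate q) {C : ℝ}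
    (hC : 0 ≤ C) (ha : a ∈ Ico (0 : ℝ) 1) (hmem : MemHardy p (Hmu μ fun z ↦ (1 - a * z)⁻¹))
    (hle : hardyNorm p (Hmu μ fun z ↦ (1 - a * z)⁻¹) ≤
      C * hardyNorm p (fun z ↦ (1 - a * z)⁻¹)) :
    (μ (Ico a 1)).toReal ≤ 4 * (3 * (p * q)) ^ 2 * C * (1 - a) := by
  have hp := hpq.pos
  have hq := hpq.symm.pos
  have ha' : 0 < 1 - a := by linarith [ha.2]
  have ha2 : 0 < 1 - a ^ 2 := by nlinarith [ha.1]
  have hmu_eq := hmu_eq_imu ((differentiableOn_inv_one_sub_mul ha).mono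
    (ball_subset_ball (one_lt_two_div_one_add ha).le))
    (integrable_tsum_norm_tc_inv_one_sub_mul (μ := μ) ha) (ofReal_mem_ball ha)
  have upper : (μ (Ico a 1)).toReal / (1 - a ^ 2) ^ 2 ≤ (3 * (p * q)) ^ 2 * C * (1 - a)⁻¹ :=
    calc (μ (Ico a 1)).toReal / (1 - a ^ 2) ^ 2
        ≤ ‖Hmu μ (fun z ↦ (1 - a * z)⁻¹) a‖ := hmu_eq ▸ measure_Ico_div_le_norm_imu ha
      _ ≤ 3 * (p * q) * (C * (3 * (p * q) * (1 - a) ^ (-(1 / q)))) * (1 - a) ^ (-(1 / p)) := by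
          refine (hmem.norm_apply_ofReal_le hpq ha).trans ?_
          gcongr
          refine hle.trans ?_
          gcongr
          exact (memHardy_and_hardyNorm_inv_one_sub_mul_le hpq ha).2
      _ = (3 * (p * q)) ^ 2 * C * ((1 - a) ^ (-(1 / q)) * (1 - a) ^ (-(1 / p))) := by ring
      _ = (3 * (p * q)) ^ 2 * C * (1 - a)⁻¹ := by
          rw [← Real.rpow_add ha', ← neg_add, one_div, one_div, hpq.symm.inv_add_inv_eq_one,
            Real.rpow_neg_one]
  calc (μ (Ico a 1)).toReal
      ≤ (3 * (p * q)) ^ 2 * C * (1 - a)⁻¹ * (1 - a ^ 2) ^ 2 := (div_le_iff₀ (by positivity)).1 upper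
    _ ≤ (3 * (p * q)) ^ 2 * C * (1 - a)⁻¹ * (2 * (1 - a)) ^ 2 := by
        gcongr
        nlinarith [ha.1]
    _ = 4 * (3 * (p * q)) ^ 2 * C * (1 - a) := by
        field_simp
        ring

end Necessity

/-- Theorem 1.4 (ii): for `1 < p < ∞`, `H_μ` is well defined and bounded on `H^p`
iff `μ` is a Carleson measure. -/
theorem hmu_bounded_Hp_iff (p : ℝ) (hp : 1 < p) (μ : Measure ℝ) [IsFiniteMeasure μ]
    (hsupp : μ (Ico (0:ℝ) 1)ᶜ = 0) :
    ((∀ f : ℂ → ℂ, MemHardy p f → HmuWD μ f ∧ MemHardy p (Hmu μ f)) ∧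
      ∃ C > 0, ∀ f : ℂ → ℂ, MemHardy p f → hardyNorm p (Hmu μ f) ≤ C * hardyNorm p f) ↔
    IsCarleson μ 1 := by
  have hpq : p.HolderConjugate p.conjExponent := .conjExponent hp
  have hq := hpq.symm.pos
  constructor
  · rintro ⟨hmem, C, hC, hle⟩
    refine ⟨4 * (3 * (p * p.conjExponent)) ^ 2 * C, by positivity, fun a ha ↦ ?_⟩
    have test_function := (memHardy_and_hardyNorm_inv_one_sub_mul_le hpq ha).1
    rw [Real.rpow_one]
    exact measure_Ico_le_of_hardyNorm_hmu_le hpq hC.le ha (hmem _ test_function).2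
      (hle _ test_function)
  · rintro ⟨C, hC, hcarleson⟩
    have hμ := hasLinearSublevels_of_carleson hC hcarleson
    refine ⟨fun f hf ↦ ⟨hmuWD_of_integrable hf.1 (hf.integrable_tsum_norm_tc hp hμ),
      (hmu_memHardy_and_hardyNorm_le hpq hμ hf).1⟩,
      (3 * (p * p.conjExponent)) ^ 2 * C.toNNReal, by positivity, fun f hf ↦
      (hmu_memHardy_and_hardyNorm_le hpq hμ hf).2⟩

end PaperHankel
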